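/- arXiv:2601.12059 — 4 statements merged into one kernel-verified Lean document; each statement's English description precedes it below -/
import Mathlib

section
/- Let 0 → A → B → C → 0 be an almost pure short exact sequence of R-modules with B almost absolutely pure. Then A is almost absolutely pure. -/
universe u

open CategoryTheory

/-- A module `E` is almost absolutely pure if `Ext¹ᴿ(N, E)` is almost zero for every
finitely presented module `N`. -/
def IsAlmostAbsolutelyPure {R : Type u} [CommRing R] (m : Ideal R)
    (E : Type u) [AddCommGroup E] [Module R E] : Prop :=
  ∀ (N : Type u) [AddCommGroup N] [Module R N], Module.FinitePresentation R N →
    ∀ s ∈ m, ∀ x : ((Ext R (ModuleCat.{u} R) 1).obj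
        (Opposite.op (ModuleCat.of R N))).obj (ModuleCat.of R E),
      s • x = 0

/-- A short exact sequence `0 → A →f B → C → 0` is almost pure if for every module `M`
the kernel of `M ⊗ A → M ⊗ B` is almost zero. -/
def IsAlmostPure {R : Type u} [CommRing R] (m : Ideal R)
    {A B : Type u} [AddCommGroup A] [Module R A] [AddCommGroup B] [Module R B]
    (f : A →ₗ[R] B) : Prop :=
  ∀ (M : Type u) [AddCommGroup M] [Module R M],
    ∀ s ∈ m, ∀ x ∈ LinearMap.ker (LinearMap.lTensor M f), s • x = 0


lemma aux_iso {R : Type u} [CommRing R] {X Y : ModuleCat.{u} R} (i : X ≅ Y) (s : R) :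
    (∀ x : X, s • x = 0) ↔ ∀ x : Y, s • x = 0 := by
  let e := i.toLinearEquiv
  constructor
  · intro h x
    have := congrArg e (h (e.symm x))
    rwa [map_smul, LinearEquiv.apply_symm_apply, map_zero] at this
  · intro h x
    have := congrArg e.symm (h (e x))
    rwa [map_smul, LinearEquiv.symm_apply_apply, map_zero] at this

lemma aux_homology {R : Type u} [CommRing R] (S : ShortComplex (ModuleCat.{u} R)) (s : R) :
    (∀ x : S.homology, s • x = 0) ↔ ∀ x : S.X₂, S.g x = 0 → ∃ y : S.X₁, S.f y = s • x := by
  rw [aux_iso S.moduleCatHomologyIso]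
  constructor
  · intro h x hx
    have h2 := h (Submodule.Quotient.mk (p := LinearMap.range S.moduleCatToCycles)
      (⟨x, hx⟩ : LinearMap.ker S.g.hom))
    have h3 := (Submodule.Quotient.mk_eq_zero (LinearMap.range S.moduleCatToCycles)
      (x := s • (⟨x, hx⟩ : LinearMap.ker S.g.hom))).1 h2
    obtain ⟨y, hy⟩ := h3
    exact ⟨y, congrArg Subtype.val hy⟩
  · intro h x
    obtain ⟨⟨x, hx⟩, rfl⟩ := Submodule.Quotient.mk_surjective
      (LinearMap.range S.moduleCatToCycles) x
    refine (Submodule.Quotient.mk_eq_zero (LinearMap.range S.moduleCatToCycles)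
      (x := s • (⟨x, hx⟩ : LinearMap.ker S.g.hom))).2 ?_
    obtain ⟨y, hy⟩ := h x hx
    exact ⟨y, Subtype.ext hy⟩

lemma aux_ext {R : Type u} [CommRing R] {X Y : ModuleCat.{u} R}
    (P : ProjectiveResolution X) (s : R) :
    (∀ x : ((Ext R (ModuleCat.{u} R) 1).obj (Opposite.op X)).obj Y, s • x = 0) ↔
    ∀ φ : P.complex.X 1 ⟶ Y, P.complex.d 2 1 ≫ φ = 0 →
      ∃ ψ : P.complex.X 0 ⟶ Y, P.complex.d 1 0 ≫ ψ = s • φ := by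
  refine (aux_iso (P.isoExt 1 Y) s).trans
    ((aux_iso (ShortComplex.homologyMapIso
      ((P.complex.linearYonedaObj R Y).isoSc' 0 1 2 (by simp) (by simp))) s).trans
    ((aux_homology _ s).trans ?_))
  rfl

lemma aux_pi {R : Type u} [CommRing R] {X : ModuleCat.{u} R}
    (P : ProjectiveResolution X) : ∃ p : P.complex.X 0 ⟶ X,
     Function.Surjective p ∧ (∀ x, p x = 0 ↔ ∃ y, P.complex.d 1 0 y = x) := by
  refine ⟨P.π.f 0, ?_, ?_⟩
  · exact (ModuleCat.epi_iff_surjective _).1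
      (Limits.epi_of_isColimit_cofork P.isColimitCokernelCofork)
  · have : (ShortComplex.mk _ _ P.complex_d_comp_π_f_zero).Exact :=
      ShortComplex.exact_of_g_is_cokernel _ P.isColimitCokernelCofork
    rw [ShortComplex.moduleCat_exact_iff] at this
    intro x
    refine ⟨this x, ?_⟩
    rintro ⟨y, rfl⟩
    have := P.complex_d_comp_π_f_zero
    exact congr($this y)

lemma aux_d {R : Type u} [CommRing R] {X : ModuleCat.{u} R}
    (P : ProjectiveResolution X) (x : P.complex.X 1) :
    P.complex.d 1 0 x = 0 ↔ ∃ y, P.complex.d 2 1 y = x := by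
  have := P.exact_succ 0
  rw [ShortComplex.moduleCat_exact_iff] at this
  refine ⟨this x, ?_⟩
  rintro ⟨y, rfl⟩
  have := P.complex.d_comp_d 2 1 0
  exact congr($this y)

/-- `s` times any map from the kernel of `p` extends. -/
def AuxKills {R : Type u} [CommRing R] {F N : Type u} [AddCommGroup F] [Module R F]
    [AddCommGroup N] [Module R N] (E : Type u) [AddCommGroup E] [Module R E]
    (p : F →ₗ[R] N) (s : R) : Prop :=
  ∀ h : LinearMap.ker p →ₗ[R] E, ∃ ψ : F →ₗ[R] E, ∀ k : LinearMap.ker p, ψ k = s • h k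

lemma aux_compare {R : Type u} [CommRing R] {F F' N : Type u} [AddCommGroup F] [Module R F]
    [AddCommGroup F'] [Module R F'] [AddCommGroup N] [Module R N]
    {E : Type u} [AddCommGroup E] [Module R E]
    [Module.Projective R F] [Module.Projective R F']
    (p : F →ₗ[R] N) (p' : F' →ₗ[R] N) (hp : Function.Surjective p)
    (hp' : Function.Surjective p') (s : R) (H : AuxKills E p' s) : AuxKills E p s := by
  intro h
  obtain ⟨α, hα⟩ := Module.projective_lifting_property p p' hp
  obtain ⟨β, hβ⟩ := Module.projective_lifting_property p' p hp'
  have hα' : ∀ x, p (α x) = p' x := fun x => congr($hα x)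
  have hβ' : ∀ x, p' (β x) = p x := fun x => congr($hβ x)
  obtain ⟨ψ', hψ'⟩ := H (h ∘ₗ (α.restrict (p := LinearMap.ker p') (q := LinearMap.ker p)
    (fun x hx => by simpa [hα'] using hx)))
  let γ : F →ₗ[R] LinearMap.ker p := LinearMap.codRestrict _ (α ∘ₗ β - LinearMap.id)
    (fun x => by simp [hα', hβ'])
  refine ⟨ψ' ∘ₗ β - s • (h ∘ₗ γ), fun k => ?_⟩
  have hk : β k ∈ LinearMap.ker p' := by simp [hβ']
  have h1 := hψ' ⟨β k, hk⟩
  simp only [LinearMap.sub_apply, LinearMap.comp_apply, LinearMap.smul_apply] at h1 ⊢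
  rw [h1, ← smul_sub, ← map_sub]
  congr 2
  ext
  simp [γ]

lemma aux_ext_kills {R : Type u} [CommRing R] {F N : Type u} [AddCommGroup F] [Module R F]
    [AddCommGroup N] [Module R N] {E : Type u} [AddCommGroup E] [Module R E]
    [Module.Projective R F] (p : F →ₗ[R] N) (hp : Function.Surjective p) (s : R) :
    (∀ x : ((Ext R (ModuleCat.{u} R) 1).obj
        (Opposite.op (ModuleCat.of R N))).obj (ModuleCat.of R E), s • x = 0) ↔
    AuxKills E p s := by
  let P := projectiveResolution (ModuleCat.of R N)
  obtain ⟨q, hq, hker⟩ := aux_pi P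
  have : Module.Projective R (P.complex.X 0) :=
    (IsProjective.iff_projective _).2 (P.projective 0)
  rw [aux_ext P]
  trans AuxKills E q.hom s
  swap
  · exact ⟨aux_compare p q.hom hp hq s, aux_compare q.hom p hq hp s⟩
  let d : P.complex.X 1 →ₗ[R] LinearMap.ker q.hom :=
    LinearMap.codRestrict _ (P.complex.d 1 0).hom (fun x => (hker _).2 ⟨x, rfl⟩)
  have hd : Function.Surjective d := by
    rintro ⟨x, hx⟩
    obtain ⟨y, hy⟩ := (hker x).1 hx
    exact ⟨y, Subtype.ext hy⟩
  constructor
  · intro H h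
    obtain ⟨ψ, hψ⟩ := H (ModuleCat.ofHom (h ∘ₗ d)) (by
      ext x
      have : d (P.complex.d 2 1 x) = 0 := Subtype.ext ((aux_d P _).2 ⟨x, rfl⟩)
      change h (d (P.complex.d 2 1 x)) = 0
      rw [this, map_zero])
    refine ⟨ψ.hom, fun k => ?_⟩
    obtain ⟨y, rfl⟩ := hd k
    exact congr($hψ y)
  · intro H φ hφ
    let e := LinearMap.quotKerEquivOfSurjective d hd
    have hle : LinearMap.ker d ≤ LinearMap.ker φ.hom := by
      intro x hx
      obtain ⟨y, rfl⟩ := (aux_d P x).1 (congrArg Subtype.val hx)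
      exact congr($hφ y)
    obtain ⟨ψ, hψ⟩ := H ((LinearMap.ker d).liftQ φ.hom hle ∘ₗ e.symm.toLinearMap)
    refine ⟨ModuleCat.ofHom ψ, ?_⟩
    ext x
    have h1 := hψ (d x)
    have h2 : e.symm (d x) = Submodule.Quotient.mk x := by
      rw [LinearEquiv.symm_apply_eq]; rfl
    rw [LinearMap.comp_apply, LinearEquiv.coe_coe, h2, Submodule.liftQ_apply] at h1
    exact h1

lemma aux_pure {R : Type u} [CommRing R] (m : Ideal R)
    {A B : Type u} [AddCommGroup A] [Module R A] [AddCommGroup B] [Module R B]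
    (f : A →ₗ[R] B) (hpure : IsAlmostPure m f) {ι κ : Type} [Fintype ι] [Fintype κ]
    [DecidableEq ι] (r : ι → κ → R) (a : ι → A) (b : κ → B)
    (h : ∀ j, f (a j) = ∑ i, r j i • b i) (s : R) (hs : s ∈ m) :
    ∃ a' : κ → A, ∀ j, s • a j = ∑ i, r j i • a' i := by
  let c : κ → ι → R := fun i j => r j i
  let W : Submodule R (ι → R) := Submodule.span R (Set.range c)
  let T : (κ → A) →ₗ[R] (ι → A) :=
    LinearMap.pi fun j => ∑ i, r j i • LinearMap.proj i
  let ev : (ι → R) →ₗ[R] A →ₗ[R] ((ι → A) ⧸ LinearMap.range T) :=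
    LinearMap.mk₂ R (fun v x => Submodule.Quotient.mk (fun j => v j • x))
      (fun v w x => by rw [← Submodule.Quotient.mk_add]; congr 1; ext j; simp [add_smul])
      (fun t v x => by rw [← Submodule.Quotient.mk_smul]; congr 1; ext j; simp [mul_smul])
      (fun v x y => by rw [← Submodule.Quotient.mk_add]; congr 1; ext j; simp)
      (fun t v x => by
        rw [← Submodule.Quotient.mk_smul]; congr 1; ext j; simp [smul_comm t])
  have hW : W ≤ LinearMap.ker ev := by
    rw [Submodule.span_le]
    rintro _ ⟨i, rfl⟩
    classical
    ext x
    refine (Submodule.Quotient.mk_eq_zero _).2 ⟨Pi.single i x, ?_⟩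
    ext j
    simp [T, c, Pi.single_apply]
  let ev' := TensorProduct.lift (W.liftQ ev hW)
  let ε : ι → (ι → R) ⧸ W := fun j => Submodule.Quotient.mk (Pi.single j 1)
  let x : TensorProduct R ((ι → R) ⧸ W) A := ∑ j, TensorProduct.tmul R (ε j) (a j)
  have hε : ∀ i, ∑ j, r j i • ε j = 0 := by
    intro i
    have : ∑ j, r j i • ε j = W.mkQ (c i) := by
      have h1 : c i = ∑ j, r j i • (Pi.single j 1 : ι → R) := by
        ext j
        simp [c, Finset.sum_apply, Pi.single_apply]
      rw [h1, map_sum]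
      simp only [map_smul]
      rfl
    rw [this]
    exact (Submodule.Quotient.mk_eq_zero _).2 (Submodule.subset_span ⟨i, rfl⟩)
  have hx : x ∈ LinearMap.ker (LinearMap.lTensor ((ι → R) ⧸ W) f) := by
    rw [LinearMap.mem_ker]
    simp only [x, map_sum, LinearMap.lTensor_tmul, h, TensorProduct.tmul_sum]
    rw [Finset.sum_comm]
    refine Finset.sum_eq_zero fun i _ => ?_
    simp only [TensorProduct.tmul_smul, TensorProduct.smul_tmul']
    rw [← TensorProduct.sum_tmul, hε, TensorProduct.zero_tmul]
  have h0 := congrArg ev' (hpure _ s hs x hx)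
  have h1 : ev' x = Submodule.Quotient.mk a := by
    have : ∀ j, ev' (TensorProduct.tmul R (ε j) (a j)) =
        (LinearMap.range T).mkQ (Pi.single j (a j)) := by
      intro j
      change (LinearMap.range T).mkQ (fun i => (Pi.single j (1 : R) : ι → R) i • a j) = _
      congr 1
      ext i
      by_cases hij : i = j
      · subst hij; simp
      · simp [hij]
    simp only [x, map_sum, this]
    rw [← map_sum, Finset.univ_sum_single]
    rfl
  rw [map_smul, h1, map_zero, ← Submodule.Quotient.mk_smul, Submodule.Quotient.mk_eq_zero] at h0
  obtain ⟨a', ha'⟩ := h0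
  refine ⟨a', fun j => ?_⟩
  have := congrFun ha' j
  simp only [T, LinearMap.pi_apply, LinearMap.sum_apply, LinearMap.smul_apply,
    LinearMap.proj_apply, Pi.smul_apply] at this
  exact this.symm

/-- An almost pure submodule of an almost absolutely pure module is
almost absolutely pure. -/
theorem almostAbsolutelyPure_of_almostPure_submodule
    {R : Type u} [CommRing R] (m : Ideal R) (hm : m * m = m)
    {A B C : Type u} [AddCommGroup A] [Module R A] [AddCommGroup B] [Module R B]
    [AddCommGroup C] [Module R C]
    (f : A →ₗ[R] B) (g : B →ₗ[R] C)
    (hf : Function.Injective f) (hg : Function.Surjective g)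
    (hfg : LinearMap.range f = LinearMap.ker g)
    (hpure : IsAlmostPure m f) (hB : IsAlmostAbsolutelyPure m B) :
    IsAlmostAbsolutelyPure m A := by
  intro N _ _ hN s hs
  obtain ⟨n, p, hp, hfg⟩ : ∃ (n : ℕ) (p : (Fin n → R) →ₗ[R] N), Function.Surjective p ∧
      (LinearMap.ker p).FG := by
    obtain ⟨n, p, hp⟩ := Module.Finite.exists_fin' R N
    exact ⟨n, p, hp, Module.FinitePresentation.fg_ker p hp⟩
  rw [aux_ext_kills p hp]
  rw [← hm] at hs
  induction hs using Submodule.mul_induction_on' with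
  | mem_mul_mem s hs t ht =>
    intro h
    obtain ⟨ψ, hψ⟩ := (aux_ext_kills p hp t).1 (hB N hN t ht) (f ∘ₗ h)
    obtain ⟨l, k, hk⟩ := Submodule.fg_iff_exists_fin_generating_family.1 hfg
    have hkm : ∀ j, k j ∈ LinearMap.ker p := fun j => hk ▸ Submodule.subset_span ⟨j, rfl⟩
    have hexp : ∀ {D : Type u} [AddCommGroup D] [Module R D] (θ : (Fin n → R) →ₗ[R] D) v,
        θ v = ∑ i, v i • θ (Pi.single i 1) := by
      intro D _ _ θ v
      conv_lhs => rw [pi_eq_sum_univ' v, map_sum]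
      simp only [map_smul]
    obtain ⟨a', ha'⟩ := aux_pure m f hpure (fun j i => k j i)
      (fun j => t • h ⟨k j, hkm j⟩) (fun i => ψ (Pi.single i 1))
      (fun j => by rw [← hexp ψ, hψ ⟨k j, hkm j⟩, map_smul]; rfl) s hs
    let θ : (Fin n → R) →ₗ[R] A := Fintype.linearCombination R a'
    refine ⟨θ, ?_⟩
    have key : ∀ v ∈ Submodule.span R (Set.range k), ∀ hv : v ∈ LinearMap.ker p,
        θ v = (s * t) • h ⟨v, hv⟩ := by
      intro v hv
      induction hv using Submodule.span_induction with
      | mem v hv =>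
        obtain ⟨j, rfl⟩ := hv
        intro hv
        rw [mul_smul, ha' j, Fintype.linearCombination_apply]
      | zero =>
        intro hv
        have : (⟨0, hv⟩ : LinearMap.ker p) = 0 := rfl
        rw [this, map_zero, map_zero, smul_zero]
      | add x y hx hy ihx ihy =>
        intro hv
        have hx' := hk ▸ hx
        have hy' := hk ▸ hy
        have : (⟨x + y, hv⟩ : LinearMap.ker p) = ⟨x, hx'⟩ + ⟨y, hy'⟩ := rfl
        rw [this, map_add, map_add, smul_add, ihx hx', ihy hy']
      | smul c x hx ihx =>
        intro hv
        have hx' := hk ▸ hx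
        have : (⟨c • x, hv⟩ : LinearMap.ker p) = c • ⟨x, hx'⟩ := rfl
        rw [this, map_smul, map_smul, ihx hx', smul_comm]
    rintro ⟨v, hv⟩
    exact key v (hk ▸ hv) hv
  | add s hs t ht ih1 ih2 =>
    intro h
    obtain ⟨ψ₁, h₁⟩ := ih1 h
    obtain ⟨ψ₂, h₂⟩ := ih2 h
    exact ⟨ψ₁ + ψ₂, fun k => by rw [LinearMap.add_apply, h₁, h₂, add_smul]⟩
end

section
/- Let R be a commutative ring, s ∈ R, and let 0 → A →f B →g C → 0 be a short exact sequence of R-modules. Then there exists an R-linear map f' : B → A with f' ∘ f = s·id_A if and only if there exists an R-linear map g' : C → B with g ∘ g' = s·id_C. -/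
universe u

/-- In a short exact sequence `0 → A →f B →g C → 0`, the map `f`
admits a retraction up to `s` iff `g` admits a section up to `s`. -/
theorem s_split_left_iff_right
    {R : Type u} [CommRing R] (s : R)
    {A B C : Type u} [AddCommGroup A] [Module R A] [AddCommGroup B] [Module R B]
    [AddCommGroup C] [Module R C]
    (f : A →ₗ[R] B) (g : B →ₗ[R] C)
    (hf : Function.Injective f) (hg : Function.Surjective g)
    (hfg : LinearMap.range f = LinearMap.ker g) :
    (∃ f' : B →ₗ[R] A, f' ∘ₗ f = s • LinearMap.id) ↔
      (∃ g' : C →ₗ[R] B, g ∘ₗ g' = s • LinearMap.id) := by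
  have gf : ∀ a, g (f a) = 0 := fun a => by
    have : f a ∈ LinearMap.ker g := hfg ▸ LinearMap.mem_range_self f a
    exact this
  have ex : ∀ b, g b = 0 → ∃ a, f a = b := fun b hb => by
    have : b ∈ LinearMap.range f := hfg ▸ (LinearMap.mem_ker.mpr hb)
    exact this
  constructor
  · rintro ⟨f', hf'⟩
    have hf2 : ∀ a, f' (f a) = s • a := fun a => by
      simpa using LinearMap.congr_fun hf' a
    let h : B →ₗ[R] B := s • LinearMap.id - f ∘ₗ f'
    have hh : ∀ b, h b = s • b - f (f' b) := fun b => rfl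
    have key : ∀ x y, g x = g y → h x = h y := fun x y hxy => by
      obtain ⟨a, ha⟩ := ex (x - y) (by rw [map_sub, hxy, sub_self])
      rw [← sub_eq_zero, ← map_sub, ← ha, hh, hf2, map_smul, sub_self]
    choose t ht using hg
    refine ⟨{ toFun := fun c => h (t c), map_add' := ?_, map_smul' := ?_ }, ?_⟩
    · intro x y
      rw [← map_add]
      exact key _ _ (by rw [map_add, ht, ht, ht])
    · intro r x
      rw [RingHom.id_apply, ← map_smul]
      exact key _ _ (by rw [map_smul, ht, ht])
    · ext c
      change g (h (t c)) = s • c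
      rw [hh, map_sub, gf, sub_zero, map_smul, ht]
  · rintro ⟨g', hg'⟩
    have hg2 : ∀ c, g (g' c) = s • c := fun c => by
      simpa using LinearMap.congr_fun hg' c
    let k : B →ₗ[R] B := s • LinearMap.id - g' ∘ₗ g
    have hk : ∀ b, k b = s • b - g' (g b) := fun b => rfl
    choose t ht using fun b => ex (k b) (by rw [hk, map_sub, hg2, map_smul, sub_self])
    refine ⟨{ toFun := t, map_add' := ?_, map_smul' := ?_ }, ?_⟩
    · intro x y
      apply hf
      rw [map_add, ht, ht, ht, map_add]
    · intro r x
      apply hf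
      rw [RingHom.id_apply, map_smul, ht, ht, map_smul]
    · ext a
      change t (f a) = s • a
      apply hf
      rw [ht, hk, gf, map_zero, sub_zero, map_smul]
end

section
/- The following are equivalent: (1) R is almost coherent; (2) for every almost pure short exact sequence 0 → A → B → C → 0 of R-modules with B almost absolutely pure, C is almost absolutely pure; (3) for every pure short exact sequence 0 → A → B → C → 0 with B almost absolutely pure, C is almost absolutely pure; (4) for every pure short exact sequence 0 → A → B → C → 0 with B absolutely pure, C is almost absolutely pure; (5) for every direct system (E_i)_{i∈I} of absolutely pure R-modules over a directed set I, the direct limit lim→ E_i is almost absolutely pure; (6) for every direct system of almost absolutely pure R-modules over a directed set, the direct limit is almost absolutely pure; (7) every R-module has an almost absolutely pure precover; (8) every R-module has an almost absolutely pure cover. -/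
universe u

open CategoryTheory

/-- A module `M` is almost finitely generated (relative to the ideal `m`). -/
def IsAlmostFG {R : Type u} [CommRing R] (m : Ideal R)
    (M : Type u) [AddCommGroup M] [Module R M] : Prop :=
  ∀ s ∈ m, ∃ (n : ℕ) (f : (Fin n → R) →ₗ[R] M), ∀ y : M, s • y ∈ LinearMap.range f

/-- A module `M` is almost finitely presented (relative to the ideal `m`). -/
def IsAlmostFP {R : Type u} [CommRing R] (m : Ideal R)
    (M : Type u) [AddCommGroup M] [Module R M] : Prop :=
  ∀ s ∈ m, ∀ t ∈ m, ∃ (n k : ℕ) (g : (Fin k → R) →ₗ[R] (Fin n → R))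
    (f : (Fin n → R) →ₗ[R] M),
      f ∘ₗ g = 0 ∧ (∀ y : M, s • y ∈ LinearMap.range f) ∧
        (∀ x ∈ LinearMap.ker f, t • x ∈ LinearMap.range g)

/-- `R` is almost coherent: every almost finitely generated ideal is
almost finitely presented. -/
def IsAlmostCoherent {R : Type u} [CommRing R] (m : Ideal R) : Prop :=
  ∀ I : Ideal R, IsAlmostFG m I → IsAlmostFP m I

/-- A short exact sequence `0 → A →f B → C → 0` is pure if for every module `M`
the map `M ⊗ A → M ⊗ B` is injective. -/
def IsPure {R : Type u} [CommRing R]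
    {A B : Type u} [AddCommGroup A] [Module R A] [AddCommGroup B] [Module R B]
    (f : A →ₗ[R] B) : Prop :=
  ∀ (M : Type u) [AddCommGroup M] [Module R M],
    Function.Injective (LinearMap.lTensor M f)

/-- A module `E` is absolutely pure if `Ext¹ᴿ(N, E) = 0` for every finitely presented
module `N`. -/
def IsAbsolutelyPure {R : Type u} [CommRing R]
    (E : Type u) [AddCommGroup E] [Module R E] : Prop :=
  ∀ (N : Type u) [AddCommGroup N] [Module R N], Module.FinitePresentation R N →
    ∀ x : ((Ext R (ModuleCat.{u} R) 1).obj
        (Opposite.op (ModuleCat.of R N))).obj (ModuleCat.of R E),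
      x = 0

/-- An almost absolutely pure precover of `M`: a map `f : E → M` with `E` almost
absolutely pure, through which every map from an almost absolutely pure module
to `M` factors. -/
def HasAAPPrecoverWith {R : Type u} [CommRing R] (m : Ideal R)
    (M : Type u) [AddCommGroup M] [Module R M]
    (E : ModuleCat.{u} R) (f : E →ₗ[R] M) : Prop :=
  IsAlmostAbsolutelyPure m E ∧
    ∀ (E' : Type u) [AddCommGroup E'] [Module R E'], IsAlmostAbsolutelyPure m E' →
      ∀ g : E' →ₗ[R] M, ∃ h : E' →ₗ[R] E, g = f ∘ₗ h

/-- Every map killing `ker d` extends along `d`, up to `s`. -/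
def CondS {R : Type u} [CommRing R] (s : R) {P₁ P₀ : Type u} [AddCommGroup P₁] [Module R P₁]
    [AddCommGroup P₀] [Module R P₀] (d : P₁ →ₗ[R] P₀)
    (E : Type u) [AddCommGroup E] [Module R E] : Prop :=
  ∀ ψ : P₁ →ₗ[R] E, (∀ x, d x = 0 → ψ x = 0) → ∃ χ : P₀ →ₗ[R] E, ∀ x, χ (d x) = s • ψ x

lemma exists_lift_of_range_le {R : Type u} [CommRing R] {P A B : Type u}
    [AddCommGroup P] [Module R P]
    [AddCommGroup A] [Module R A] [AddCommGroup B] [Module R B] [Module.Projective R P]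
    (f : A →ₗ[R] B) (g : P →ₗ[R] B) (h : ∀ x, g x ∈ LinearMap.range f) :
    ∃ k : P →ₗ[R] A, ∀ x, f (k x) = g x := by
  obtain ⟨k, hk⟩ := Module.projective_lifting_property f.rangeRestrict
    (g.codRestrict (LinearMap.range f) h) f.surjective_rangeRestrict
  refine ⟨k, fun x => ?_⟩
  have := congrArg Subtype.val (LinearMap.congr_fun hk x)
  simpa using this

lemma CondS.transfer {R : Type u} [CommRing R] (s : R) {P₁ P₀ Q₁ Q₀ N E : Type u}
    [AddCommGroup P₁] [Module R P₁] [AddCommGroup P₀] [Module R P₀]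
    [AddCommGroup Q₁] [Module R Q₁] [AddCommGroup Q₀] [Module R Q₀]
    [AddCommGroup N] [Module R N] [AddCommGroup E] [Module R E]
    [Module.Projective R P₀] [Module.Projective R Q₀] [Module.Projective R Q₁]
    (d : P₁ →ₗ[R] P₀) (p : P₀ →ₗ[R] N) (a : Q₁ →ₗ[R] Q₀) (q : Q₀ →ₗ[R] N)
    (hp : Function.Surjective p) (hq : Function.Surjective q)
    (hd : LinearMap.range d = LinearMap.ker p) (ha : LinearMap.range a = LinearMap.ker q)
    (H : CondS s a E) : CondS s d E := by
  intro ψ hψ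
  have hpd : ∀ x, p (d x) = 0 := fun x => by
    have : d x ∈ LinearMap.range d := ⟨x, rfl⟩
    rwa [hd] at this
  have hqa : ∀ x, q (a x) = 0 := fun x => by
    have : a x ∈ LinearMap.range a := ⟨x, rfl⟩
    rwa [ha] at this
  obtain ⟨α0, hα0⟩ := exists_lift_of_range_le p q (fun x => hp _)
  obtain ⟨β0, hβ0⟩ := exists_lift_of_range_le q p (fun x => hq _)
  obtain ⟨α1, hα1⟩ := exists_lift_of_range_le d (α0 ∘ₗ a) (fun x => by
    rw [hd]; simp [hα0, hqa])
  obtain ⟨h, hh⟩ := exists_lift_of_range_le d (LinearMap.id - α0 ∘ₗ β0) (fun x => by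
    rw [hd]; simp [hα0, hβ0])
  obtain ⟨ψ', hψ'⟩ := H (ψ ∘ₗ α1) (fun x hx => hψ _ (by rw [hα1]; simp [hx]))
  refine ⟨ψ' ∘ₗ β0 + s • (ψ ∘ₗ h), fun x => ?_⟩
  have hx : β0 (d x) ∈ LinearMap.range a := by
    rw [ha]; simp [hβ0, hpd]
  obtain ⟨y, hy⟩ := hx
  have h1 : ψ (h (d x) - x + α1 y) = 0 := by
    apply hψ
    simp [hh, hα1, hy]
  have h2 := hψ' y
  rw [map_add, map_sub] at h1
  have h3 : ψ (h (d x)) = ψ x - ψ (α1 y) := by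
    rw [← sub_eq_zero, ← h1]; abel
  simp only [LinearMap.add_apply, LinearMap.comp_apply, LinearMap.smul_apply, ← hy, h2, h3,
    smul_sub]
  simp

lemma homology_smul_zero_iff {R : Type u} [CommRing R] (s : R) (S : ShortComplex (ModuleCat.{u} R)) :
    (∀ x : S.homology, s • x = 0) ↔
      ∀ x : S.X₂, S.g x = 0 → ∃ y : S.X₁, S.f y = s • x := by
  let e : S.homology ≃ₗ[R] (LinearMap.ker S.g.hom ⧸ LinearMap.range S.moduleCatToCycles) :=
    S.moduleCatHomologyIso.toLinearEquiv
  have : (∀ x : S.homology, s • x = 0) ↔ ∀ x : (LinearMap.ker S.g.hom ⧸ LinearMap.range S.moduleCatToCycles), s • x = 0 := by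
    constructor
    · intro h x
      rw [← e.apply_symm_apply x, ← map_smul, h, map_zero]
    · intro h x
      rw [← e.symm_apply_apply x, ← map_smul, h, map_zero]
  rw [this]
  constructor
  · intro h x hx
    have := h (Submodule.Quotient.mk ⟨x, hx⟩)
    rw [← Submodule.Quotient.mk_smul, Submodule.Quotient.mk_eq_zero] at this
    obtain ⟨y, hy⟩ := this
    exact ⟨y, congrArg Subtype.val hy⟩
  · intro h x
    obtain ⟨⟨x, hx⟩, rfl⟩ := Submodule.Quotient.mk_surjective _ x
    obtain ⟨y, hy⟩ := h x hx
    rw [← Submodule.Quotient.mk_smul, Submodule.Quotient.mk_eq_zero]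
    exact ⟨y, Subtype.ext hy⟩

lemma ext_smul_zero_iff {R : Type u} [CommRing R] (s : R) (N E : ModuleCat.{u} R)
    (P : ProjectiveResolution N) :
    (∀ x : ((Ext R (ModuleCat.{u} R) 1).obj (Opposite.op N)).obj E, s • x = 0) ↔
      CondS s (P.complex.d 1 0).hom E := by
  let e := (P.isoExt (R := R) 1 E ≪≫ ShortComplex.homologyMapIso
    ((P.complex.linearYonedaObj R E).isoSc' 0 1 2 (by simp) (by simp))).toLinearEquiv
  have : (∀ x : ((Ext R (ModuleCat.{u} R) 1).obj (Opposite.op N)).obj E, s • x = 0) ↔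
      ∀ x : ((P.complex.linearYonedaObj R E).sc' 0 1 2).homology, s • x = 0 := by
    constructor
    · intro h x
      rw [← e.apply_symm_apply x, ← map_smul, h, map_zero]
    · intro h x
      rw [← e.symm_apply_apply x, ← map_smul, h, map_zero]
  rw [this, homology_smul_zero_iff]
  have hex := (P.exact_succ 0).moduleCat_range_eq_ker
  constructor
  · intro h ψ hψ
    obtain ⟨y, hy⟩ := h (ModuleCat.ofHom ψ) (by
      show P.complex.d 2 1 ≫ ModuleCat.ofHom ψ = 0
      ext x
      apply hψ
      have : (P.complex.d 2 1 ≫ P.complex.d 1 0) x = 0 := by simp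
      exact this)
    replace hy : P.complex.d 1 0 ≫ (show P.complex.X 0 ⟶ E from y) = s • ModuleCat.ofHom ψ := hy
    refine ⟨ModuleCat.Hom.hom (show P.complex.X 0 ⟶ E from y), fun x => ?_⟩
    exact congrArg (fun t => t.hom x) hy
  · intro h x hx
    let x' : P.complex.X 1 ⟶ E := x
    replace hx : P.complex.d 2 1 ≫ x' = 0 := hx
    obtain ⟨χ, hχ⟩ := h x'.hom (fun z hz => by
      have hz' : z ∈ LinearMap.ker (P.complex.d 1 0).hom := hz
      have : z ∈ LinearMap.range (P.complex.d 2 1).hom := by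
        have := hex.symm ▸ hz'
        exact this
      obtain ⟨w, rfl⟩ := this
      exact congrArg (fun t => t.hom w) hx)
    refine ⟨ModuleCat.ofHom χ, ?_⟩
    show P.complex.d 1 0 ≫ ModuleCat.ofHom χ = s • x'
    ext z
    simpa using hχ z

/-- Elementary form of `s`-absolute purity. -/
def SAP {R : Type u} [CommRing R] (s : R) (E : Type u) [AddCommGroup E] [Module R E] : Prop :=
  ∀ (k n : ℕ) (a : (Fin k → R) →ₗ[R] (Fin n → R)), CondS s a E

lemma sap_iff_ext {R : Type u} [CommRing R] (s : R) (E : Type u) [AddCommGroup E] [Module R E] :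
    (∀ (N : Type u) [AddCommGroup N] [Module R N], Module.FinitePresentation R N →
    ∀ x : ((Ext R (ModuleCat.{u} R) 1).obj
        (Opposite.op (ModuleCat.of R N))).obj (ModuleCat.of R E),
      s • x = 0) ↔ SAP s E := by
  have key : ∀ (N : Type u) [AddCommGroup N] [Module R N] (k n : ℕ)
      (a : (Fin k → R) →ₗ[R] (Fin n → R)) (q : (Fin n → R) →ₗ[R] N) (hq : Function.Surjective q)
      (ha : LinearMap.range a = LinearMap.ker q),
      (∀ x : ((Ext R (ModuleCat.{u} R) 1).obj
        (Opposite.op (ModuleCat.of R N))).obj (ModuleCat.of R E),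
      s • x = 0) ↔ CondS s a E := by
    intro N _ _ k n a q hq ha
    let P := projectiveResolution (ModuleCat.of R N)
    rw [ext_smul_zero_iff s _ _ P]
    have i0 : Module.Projective R (P.complex.X 0) :=
      (IsProjective.iff_projective (R := R) (P.complex.X 0)).2 (P.projective 0)
    have i1 : Module.Projective R (P.complex.X 1) :=
      (IsProjective.iff_projective (R := R) (P.complex.X 1)).2 (P.projective 1)
    have hs : Function.Surjective (P.π.f 0).hom :=
      (ModuleCat.epi_iff_surjective (P.π.f 0)).1 inferInstance
    have hd : LinearMap.range (P.complex.d 1 0).hom = LinearMap.ker (P.π.f 0).hom :=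
      P.exact₀.moduleCat_range_eq_ker
    let e : (((ChainComplex.single₀ (ModuleCat.{u} R)).obj (ModuleCat.of R N)).X 0) ≃ₗ[R] N :=
      (HomologicalComplex.singleObjXSelf (ComplexShape.down ℕ) 0 (ModuleCat.of R N)).toLinearEquiv
    have hs' : Function.Surjective (e.toLinearMap ∘ₗ (P.π.f 0).hom) := e.surjective.comp hs
    have hd' : LinearMap.range (P.complex.d 1 0).hom =
        LinearMap.ker (e.toLinearMap ∘ₗ (P.π.f 0).hom) := by
      rw [hd, LinearEquiv.ker_comp]
    exact ⟨fun h => CondS.transfer s a q _ _ hq hs' ha hd' h,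
      fun h => CondS.transfer s _ _ a q hs' hq hd' ha h⟩
  constructor
  · intro h k n a
    refine (key ((Fin n → R) ⧸ LinearMap.range a) k n a (Submodule.mkQ _)
      (Submodule.mkQ_surjective _) (by simp)).1 (h _ ?_)
    apply Module.finitePresentation_of_surjective (Submodule.mkQ (LinearMap.range a))
      (Submodule.mkQ_surjective _)
    rw [Submodule.ker_mkQ]
    exact Submodule.FG.of_finite
  · intro h N _ _ hN
    obtain ⟨n, k, q, a, hq, ha⟩ := Module.FinitePresentation.exists_fin' R N
    exact (key N k n a q hq (LinearMap.exact_iff.1 ha).symm).2 (h _ _ _)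

lemma aap_iff {R : Type u} [CommRing R] (m : Ideal R) (E : Type u) [AddCommGroup E] [Module R E] :
    IsAlmostAbsolutelyPure m E ↔ ∀ s ∈ m, SAP s E := by
  constructor
  · intro h s hs
    exact (sap_iff_ext s E).1 (fun N _ _ hN => h N hN s hs)
  · intro h N _ _ hN s hs
    exact (sap_iff_ext s E).2 (h s hs) N hN

lemma ap_iff {R : Type u} [CommRing R] (E : Type u) [AddCommGroup E] [Module R E] :
    IsAbsolutelyPure (R := R) E ↔ SAP (1 : R) E := by
  rw [← sap_iff_ext]
  constructor
  · intro h N _ _ hN x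
    rw [h N hN x, smul_zero]
  · intro h N _ _ hN x
    rw [← h N hN x, one_smul]
section Part2
variable {R : Type u} [CommRing R]

lemma ind_m {m : Ideal R} (hm : m * m = m) {Q : R → Prop}
    (hmul : ∀ s ∈ m, ∀ t ∈ m, Q (s * t)) (hadd : ∀ s t, Q s → Q t → Q (s + t)) :
    ∀ t ∈ m, Q t := by
  intro t ht
  rw [← hm] at ht
  exact Submodule.mul_induction_on ht hmul (fun x y => hadd x y)

lemma SAP.add {s t : R} {E : Type u} [AddCommGroup E] [Module R E]
    (hs : SAP s E) (ht : SAP t E) : SAP (s + t) E := by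
  intro k n a ψ hψ
  obtain ⟨χ, h1⟩ := hs k n a ψ hψ
  obtain ⟨χ', h2⟩ := ht k n a ψ hψ
  exact ⟨χ + χ', fun x => by simp [h1, h2, add_smul]⟩

lemma SAP.mul_left {s : R} (r : R) {E : Type u} [AddCommGroup E] [Module R E]
    (hs : SAP s E) : SAP (r * s) E := by
  intro k n a ψ hψ
  obtain ⟨χ, h1⟩ := hs k n a ψ hψ
  exact ⟨r • χ, fun x => by simp [h1, mul_smul]⟩

lemma SAP.of_one (r : R) {E : Type u} [AddCommGroup E] [Module R E]
    (hs : SAP (1 : R) E) : SAP r E := by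
  have := hs.mul_left r
  rwa [mul_one] at this

/-- the kernel of `a` is f.g. up to `t`. -/
def KT (t : R) {P Q : Type u} [AddCommGroup P] [Module R P] [AddCommGroup Q] [Module R Q]
    (a : P →ₗ[R] Q) : Prop :=
  ∃ G : Submodule R P, G.FG ∧ (∀ x ∈ G, a x = 0) ∧ ∀ x, a x = 0 → t • x ∈ G

lemma KT.add {s t : R} {P Q : Type u} [AddCommGroup P] [Module R P] [AddCommGroup Q] [Module R Q]
    {a : P →ₗ[R] Q} (hs : KT s a) (ht : KT t a) : KT (s + t) a := by
  obtain ⟨G, h1, h2, h3⟩ := hs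
  obtain ⟨G', h1', h2', h3'⟩ := ht
  refine ⟨G ⊔ G', h1.sup h1', ?_, ?_⟩
  · intro x hx
    have : G ⊔ G' ≤ LinearMap.ker a := sup_le h2 h2'
    exact this hx
  · intro x hx
    rw [add_smul]
    exact Submodule.add_mem_sup (h3 x hx) (h3' x hx)

lemma KT.mul_left {s : R} (r : R) {P Q : Type u} [AddCommGroup P] [Module R P] [AddCommGroup Q]
    [Module R Q] {a : P →ₗ[R] Q} (hs : KT s a) : KT (r * s) a := by
  obtain ⟨G, h1, h2, h3⟩ := hs
  refine ⟨G, h1, h2, fun x hx => ?_⟩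
  rw [mul_smul]
  exact G.smul_mem _ (h3 x hx)

lemma KT.exists_map {s : R} {P Q : Type u} [AddCommGroup P] [Module R P] [AddCommGroup Q]
    [Module R Q] {a : P →ₗ[R] Q} (hs : KT s a) :
    ∃ (l : ℕ) (c : (Fin l → R) →ₗ[R] P), (∀ x, a (c x) = 0) ∧ ∀ x, a x = 0 → ∃ w, c w = s • x := by
  obtain ⟨G, h1, h2, h3⟩ := hs
  obtain ⟨l, c, rfl⟩ := (Submodule.fg_iff_exists_fin_linearMap R P).1 h1
  exact ⟨l, c, fun x => h2 _ ⟨x, rfl⟩, fun x hx => h3 x hx⟩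

def KAFG1 (m : Ideal R) : Prop := ∀ (k : ℕ) (f : (Fin k → R) →ₗ[R] R), ∀ t ∈ m, KT t f

def KAFG (m : Ideal R) : Prop :=
  ∀ (n k : ℕ) (f : (Fin k → R) →ₗ[R] (Fin n → R)), ∀ t ∈ m, KT t f

lemma KAFG1.of_coherent {m : Ideal R} (hm : m * m = m) (h : IsAlmostCoherent m) : KAFG1 m := by
  intro k f
  refine ind_m hm ?_ (fun s t => KT.add)
  intro t ht s hs
  obtain ⟨n', k', g', f', hfg, hs', ht'⟩ := h (LinearMap.range f)
    (fun s hs => ⟨k, f.rangeRestrict, fun y => f.surjective_rangeRestrict _⟩) s hs t ht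
  obtain ⟨a, ha⟩ := exists_lift_of_range_le f' (s • f.rangeRestrict) (fun x => hs' _)
  obtain ⟨b, hb⟩ := exists_lift_of_range_le f.rangeRestrict f'
    (fun x => f.surjective_rangeRestrict _)
  have hfb : ∀ y, f (b y) = (f' y : R) := fun y => congrArg Subtype.val (hb y)
  have hfa : ∀ x, (f' (a x) : R) = s * f x := fun y => congrArg Subtype.val (ha y)
  refine ⟨LinearMap.range (b ∘ₗ g') ⊔ LinearMap.range (b ∘ₗ a - s • LinearMap.id),
    Submodule.FG.sup (Submodule.FG.of_finite) (Submodule.FG.of_finite), ?_, ?_⟩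
  · intro x hx
    have : LinearMap.range (b ∘ₗ g') ⊔ LinearMap.range (b ∘ₗ a - s • LinearMap.id)
        ≤ LinearMap.ker f := by
      refine sup_le ?_ ?_
      · rintro _ ⟨x, rfl⟩
        have := LinearMap.congr_fun hfg x
        simp only [LinearMap.comp_apply] at this
        simp [hfb, this]
      · rintro _ ⟨x, rfl⟩
        simp [hfb, hfa]
    exact this hx
  · intro x hx
    obtain ⟨w, hw⟩ := ht' (a x) (by
      rw [LinearMap.mem_ker]
      apply Subtype.ext
      rw [hfa, hx]; simp)
    have : (t * s) • x = (b ∘ₗ g') w +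
        (b ∘ₗ a - s • LinearMap.id : (Fin k → R) →ₗ[R] (Fin k → R)) (-(t • x)) := by
      simp [hw, mul_smul, smul_comm s t]
    rw [this]
    exact Submodule.add_mem_sup ⟨_, rfl⟩ ⟨_, rfl⟩

lemma KAFG1.coherent {m : Ideal R} (h : KAFG1 m) : IsAlmostCoherent m := by
  intro I hI s hs t ht
  obtain ⟨n, f, hf⟩ := hI s hs
  obtain ⟨k, g, hg1, hg2⟩ := (h n (I.subtype ∘ₗ f) t ht).exists_map
  refine ⟨n, k, g, f, ?_, hf, ?_⟩
  · refine LinearMap.ext fun x => Subtype.ext ?_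
    simpa using hg1 x
  · intro x hx
    exact hg2 x (by simpa using hx)

lemma KAFG1.kafg {m : Ideal R} (hm : m * m = m) (h : KAFG1 m) : KAFG m := by
  intro n
  induction n with
  | zero =>
    intro k f t ht
    exact ⟨⊤, Module.finite_def.1 inferInstance, fun x _ => Subsingleton.elim _ _, fun x _ => trivial⟩
  | succ n ih =>
    intro k f
    refine ind_m hm ?_ (fun s t => KT.add)
    intro t ht s hs
    obtain ⟨l, c, hc1, hc2⟩ := (h k (LinearMap.proj 0 ∘ₗ f) s hs).exists_map
    obtain ⟨G, hG1, hG2, hG3⟩ := ih l (LinearMap.funLeft R R Fin.succ ∘ₗ f ∘ₗ c) t ht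
    refine ⟨G.map c, hG1.map c, ?_, ?_⟩
    · rintro _ ⟨x, hx, rfl⟩
      ext i
      refine Fin.cases ?_ (fun j => ?_) i
      · exact hc1 x
      · exact congrFun (hG2 x hx) j
    · intro x hx
      obtain ⟨w, hw⟩ := hc2 x (by simp [hx])
      refine ⟨t • w, hG3 w ?_, ?_⟩
      · simp only [LinearMap.comp_apply, hw, map_smul, hx, smul_zero, map_zero]
      · rw [map_smul, hw, mul_smul]

/-- equational purity of `ker g` up to `s` -/
def EPv (s : R) {B C : Type u} [AddCommGroup B] [Module R B] [AddCommGroup C] [Module R C]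
    (g : B →ₗ[R] C) : Prop :=
  ∀ (p k : ℕ) (b : Fin p → Fin k → R) (y : Fin k → B), (∀ i, g (∑ j, b i j • y j) = 0) →
    ∃ z : Fin k → B, (∀ j, g (z j) = 0) ∧ ∀ i, ∑ j, b i j • z j = s • ∑ j, b i j • y j

lemma linmap_fin_apply {k : ℕ} {B : Type u} [AddCommGroup B] [Module R B]
    (φ : (Fin k → R) →ₗ[R] B) (x : Fin k → R) :
    φ x = ∑ j, x j • φ (Pi.single j 1) := by
  classical
  conv_lhs => rw [pi_eq_sum_univ' x]
  simp only [map_sum, map_smul]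

lemma sap_of_epv_aux {t' t s : R} {B C : Type u} [AddCommGroup B] [Module R B]
    [AddCommGroup C] [Module R C] (g : B →ₗ[R] C) (hg : Function.Surjective g)
    (ht' : SAP t' B) (hs : EPv s g)
    (ht : ∀ (k n : ℕ) (a : (Fin k → R) →ₗ[R] (Fin n → R)), KT t a) :
    SAP (t' * (t * s)) C := by
  classical
  intro k n a ψ hψ
  obtain ⟨φ, hφ⟩ := exists_lift_of_range_le g ψ (fun x => hg _)
  obtain ⟨p, b, hb1, hb2⟩ := (ht k n a).exists_map
  obtain ⟨z, hz1, hz2⟩ := hs p k (fun i => b (Pi.single i 1)) (fun j => φ (Pi.single j 1))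
    (fun i => by rw [← linmap_fin_apply, hφ]; exact hψ _ (hb1 _))
  let ζ : (Fin k → R) →ₗ[R] B := Fintype.linearCombination R z
  have hζ : ∀ w, ζ (b w) = s • φ (b w) := by
    have : ζ ∘ₗ b = s • (φ ∘ₗ b) := by
      refine LinearMap.pi_ext' fun i => LinearMap.ext_ring ?_
      have := hz2 i
      rw [← linmap_fin_apply] at this
      simpa [ζ, Fintype.linearCombination_apply] using this
    exact fun w => LinearMap.congr_fun this w
  have hgζ : ∀ x, g (ζ x) = 0 := by
    intro x
    simp [ζ, Fintype.linearCombination_apply, hz1]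
  obtain ⟨χ, hχ⟩ := ht' k n a (t • (s • φ - ζ)) (fun x hx => by
    obtain ⟨w, hw⟩ := hb2 x hx
    have : t • (s • φ - ζ) x = (s • φ - ζ) (b w) := by rw [hw, map_smul]
    rw [LinearMap.smul_apply, this]
    simp [hζ])
  refine ⟨g ∘ₗ χ, fun x => ?_⟩
  simp [hχ, hgζ, hφ, mul_smul]

lemma aap_of_epv {m : Ideal R} (hm : m * m = m) (hK : KAFG m) {B C : Type u} [AddCommGroup B]
    [Module R B] [AddCommGroup C] [Module R C] (g : B →ₗ[R] C) (hg : Function.Surjective g)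
    (hB : ∀ s ∈ m, SAP s B) (hE : ∀ s ∈ m, EPv s g) : ∀ s ∈ m, SAP s C := by
  refine ind_m hm ?_ (fun s t => SAP.add)
  intro t' ht'
  refine ind_m hm ?_ (fun s t hs ht => by rw [mul_add]; exact hs.add ht)
  intro t ht s hs
  exact sap_of_epv_aux g hg (hB _ ht') (hE s hs) (fun k n a => hK n k a t ht)

open TensorProduct in
lemma IsAlmostPure.epv {m : Ideal R} {A B C : Type u} [AddCommGroup A] [Module R A]
    [AddCommGroup B] [Module R B] [AddCommGroup C] [Module R C] {f : A →ₗ[R] B} {g : B →ₗ[R] C}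
    (hfg : LinearMap.range f = LinearMap.ker g) (hf : IsAlmostPure m f) :
    ∀ s ∈ m, EPv s g := by
  classical
  intro s hs p k b y hy
  have : ∀ i, ∃ w, f w = ∑ j, b i j • y j := fun i => by
    have : ∑ j, b i j • y j ∈ LinearMap.ker g := hy i
    rw [← hfg] at this
    exact this
  choose w hw using this
  let c : (Fin k → R) →ₗ[R] (Fin p → R) := Fintype.linearCombination R (fun j i => b i j)
  let N := LinearMap.range c
  let e : Fin p → (Fin p → R) ⧸ N := fun i => N.mkQ (Pi.single i 1)
  have he : ∀ v : Fin p → R, ∑ i, v i • e i = N.mkQ v := fun v => by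
    rw [linmap_fin_apply N.mkQ v]
  have he0 : ∀ j, ∑ i, b i j • e i = 0 := by
    intro j
    rw [he (fun i => b i j)]
    rw [Submodule.mkQ_apply, Submodule.Quotient.mk_eq_zero]
    exact ⟨Pi.single j 1, by simp [c]⟩
  have h0 := hf ((Fin p → R) ⧸ N) s hs (∑ i, e i ⊗ₜ w i) (by
    rw [LinearMap.mem_ker, map_sum]
    simp only [LinearMap.lTensor_tmul, hw, TensorProduct.tmul_sum]
    rw [Finset.sum_comm]
    refine Finset.sum_eq_zero fun j _ => ?_
    simp only [TensorProduct.tmul_smul, TensorProduct.smul_tmul', ← TensorProduct.sum_tmul, he0, TensorProduct.zero_tmul])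
  rw [Finset.smul_sum] at h0
  simp only [← TensorProduct.tmul_smul] at h0
  obtain ⟨κ, a, y', h1, h2⟩ := TensorProduct.vanishesTrivially_of_sum_tmul_eq_zero R
    (by
      rw [eq_top_iff]
      rintro x -
      obtain ⟨v, rfl⟩ := N.mkQ_surjective x
      rw [← he]
      exact Submodule.sum_mem _ fun i _ => Submodule.smul_mem _ _ (Submodule.subset_span ⟨i, rfl⟩)) h0
  beta_reduce at h1
  have : ∀ l, ∃ d, c d = fun i => a i l := by
    intro l
    have := h2 l
    rw [he (fun i => a i l), Submodule.mkQ_apply, Submodule.Quotient.mk_eq_zero] at this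
    exact this
  choose d hd using this
  refine ⟨fun j => f (∑ l, d l j • y' l), fun j => ?_, fun i => ?_⟩
  · have : f (∑ l, d l j • y' l) ∈ LinearMap.range f := ⟨_, rfl⟩
    rw [hfg] at this
    exact this
  · rw [← hw, ← map_smul, h1]
    simp only [← map_smul, ← map_sum]
    congr 1
    simp only [Finset.smul_sum]
    rw [Finset.sum_comm]
    refine Finset.sum_congr rfl fun l _ => ?_
    have := congrFun (hd l) i
    simp only [← this, c, Fintype.linearCombination_apply, Finset.sum_apply, Pi.smul_apply,
      smul_eq_mul, Finset.sum_smul, mul_smul]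
    refine Finset.sum_congr rfl fun j _ => ?_
    rw [smul_comm]

lemma IsPure.almostPure (m : Ideal R) {A B : Type u} [AddCommGroup A] [Module R A]
    [AddCommGroup B] [Module R B] {f : A →ₗ[R] B} (hf : IsPure f) : IsAlmostPure m f := by
  intro M _ _ s hs x hx
  have : x = 0 := hf M (by rw [LinearMap.mem_ker.1 hx, map_zero])
  rw [this, smul_zero]

open TensorProduct in
lemma EPv.isPure {A B C : Type u} [AddCommGroup A] [Module R A]
    [AddCommGroup B] [Module R B] [AddCommGroup C] [Module R C] {f : A →ₗ[R] B} {g : B →ₗ[R] C}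
    (hf : Function.Injective f) (hfg : LinearMap.range f = LinearMap.ker g) (h : EPv (1 : R) g) :
    IsPure f := by
  classical
  intro M _ _
  rw [injective_iff_map_eq_zero]
  intro x hx
  obtain ⟨P, hP, t, rfl⟩ := TensorProduct.exists_of_fg (R := R) x
  have h1 : LinearMap.rTensor B P.subtype (LinearMap.lTensor P f t) = 0 := by
    rw [← hx]
    rw [← LinearMap.comp_apply, ← LinearMap.comp_apply, LinearMap.rTensor_comp_lTensor,
      LinearMap.lTensor_comp_rTensor]
  obtain ⟨Q, hPQ, hQ, h2⟩ := TensorProduct.eq_zero_of_fg_of_subtype_eq_zero hP h1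
  have h3 : LinearMap.lTensor Q f (LinearMap.rTensor A (Submodule.inclusion hPQ) t) = 0 := by
    rw [← h2]
    rw [← LinearMap.comp_apply, ← LinearMap.comp_apply, LinearMap.rTensor_comp_lTensor,
      LinearMap.lTensor_comp_rTensor]
  have h4 : LinearMap.rTensor A (Submodule.inclusion hPQ) t = 0 := by
    generalize LinearMap.rTensor A (Submodule.inclusion hPQ) t = q at h3
    have : Module.Finite R Q := Module.Finite.iff_fg.2 hQ
    obtain ⟨n, e, he⟩ := Module.Finite.exists_fin (R := R) (M := Q)
    have hq : ∃ w : Fin n → A, q = ∑ i, e i ⊗ₜ w i := by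
      clear h3
      induction q using TensorProduct.induction_on with
      | zero => exact ⟨0, by simp⟩
      | tmul v a =>
        have hv : v ∈ Submodule.span R (Set.range e) := by rw [he]; trivial
        obtain ⟨c, rfl⟩ := (Submodule.mem_span_range_iff_exists_fun R).1 hv
        refine ⟨fun i => c i • a, ?_⟩
        simp [TensorProduct.sum_tmul, TensorProduct.smul_tmul]
      | add p q hp hq =>
        obtain ⟨w, rfl⟩ := hp
        obtain ⟨w', rfl⟩ := hq
        exact ⟨w + w', by simp [TensorProduct.tmul_add, Finset.sum_add_distrib]⟩
    obtain ⟨w, rfl⟩ := hq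
    simp only [map_sum, LinearMap.lTensor_tmul] at h3
    obtain ⟨k, a, y, h5, h6⟩ := TensorProduct.vanishesTrivially_of_sum_tmul_eq_zero R he h3
    beta_reduce at h5
    obtain ⟨z, hz1, hz2⟩ := h n k a y (fun i => by
      rw [← h5]
      have : f (w i) ∈ LinearMap.range f := ⟨_, rfl⟩
      rw [hfg] at this
      exact this)
    have : ∀ j, ∃ v, f v = z j := fun j => by
      have : z j ∈ LinearMap.ker g := hz1 j
      rw [← hfg] at this
      exact this
    choose v hv using this
    refine TensorProduct.sum_tmul_eq_zero_of_vanishesTrivially R ⟨k, a, v, fun i => hf ?_, h6⟩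
    rw [h5, ← one_smul R (∑ j, a i j • y j), ← hz2]
    simp [hv]
  have h5 : LinearMap.rTensor A P.subtype t =
      LinearMap.rTensor A Q.subtype (LinearMap.rTensor A (Submodule.inclusion hPQ) t) := by
    rw [← LinearMap.comp_apply, ← LinearMap.rTensor_comp]
    rfl
  rw [h5, h4, map_zero]

end Part2
section Part3
variable {R : Type u} [CommRing R]

lemma SAP.retract {s : R} {E P : Type u} [AddCommGroup E] [Module R E] [AddCommGroup P] [Module R P]
    (i : E →ₗ[R] P) (p : P →ₗ[R] E) (h : ∀ x, p (i x) = x) (hP : SAP s P) : SAP s E := by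
  intro k n a ψ hψ
  obtain ⟨χ, hχ⟩ := hP k n a (i ∘ₗ ψ) (fun x hx => by simp [hψ x hx])
  exact ⟨p ∘ₗ χ, fun x => by simp [hχ, h]⟩

lemma SAP.pi {s : R} {ι : Type u} {E : ι → Type u} [∀ i, AddCommGroup (E i)] [∀ i, Module R (E i)]
    (h : ∀ i, SAP s (E i)) : SAP s (∀ i, E i) := by
  intro k n a ψ hψ
  have : ∀ i, ∃ χ : (Fin n → R) →ₗ[R] E i, ∀ x, χ (a x) = s • ψ x i := fun i =>
    h i k n a (LinearMap.proj i ∘ₗ ψ) (fun x hx => by simp [hψ x hx])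
  choose χ hχ using this
  exact ⟨LinearMap.pi χ, fun x => by ext i; simp [hχ]⟩

lemma SAP.of_injective {E : Type u} [AddCommGroup E] [Module R E] (hE : Module.Injective R E) :
    SAP (1 : R) E := by
  intro k n a ψ hψ
  let ψ' : ((Fin k → R) ⧸ LinearMap.ker a) →ₗ[R] E := (LinearMap.ker a).liftQ ψ hψ
  let a' : ((Fin k → R) ⧸ LinearMap.ker a) →ₗ[R] (Fin n → R) := (LinearMap.ker a).liftQ a le_rfl
  have ha' : Function.Injective a' := by
    rw [← LinearMap.ker_eq_bot]
    exact Submodule.ker_liftQ_eq_bot _ _ _ le_rfl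
  obtain ⟨χ, hχ⟩ := hE.out a' ha' ψ'
  refine ⟨χ, fun x => ?_⟩
  have := hχ (Submodule.Quotient.mk x)
  rw [one_smul]
  exact this

open DirectSum in
lemma SAP.directSum {s : R} {ι : Type u} [DecidableEq ι] {E : ι → Type u}
    [∀ i, AddCommGroup (E i)] [∀ i, Module R (E i)]
    (h : ∀ i, SAP s (E i)) : SAP s (⨁ i, E i) := by
  classical
  intro k n a ψ hψ
  have : ∀ i, ∃ χ : (Fin n → R) →ₗ[R] E i, ∀ x, χ (a x) = s • ψ x i := fun i =>
    h i k n a (DirectSum.component R ι E i ∘ₗ ψ) (fun x hx => by simp [hψ x hx])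
  choose χ hχ using this
  let F : Finset ι := Finset.univ.biUnion (fun j : Fin k => DFinsupp.support (ψ (Pi.single j 1)))
  refine ⟨∑ i ∈ F, DirectSum.lof R ι E i ∘ₗ χ i, fun x => ?_⟩
  simp only [LinearMap.sum_apply, LinearMap.comp_apply, hχ, map_smul, ← Finset.smul_sum]
  congr 1
  have hsub : ∀ i, i ∉ F → ψ x i = 0 := by
    intro i hi
    have h0 : ∀ j, (ψ (Pi.single j 1)) i = 0 := by
      intro j
      by_contra hne
      exact hi (Finset.mem_biUnion.2 ⟨j, Finset.mem_univ _, DFinsupp.mem_support_iff.2 hne⟩)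
    have := linmap_fin_apply (DirectSum.component R ι E i ∘ₗ ψ) x
    refine Eq.trans this ?_
    exact Finset.sum_eq_zero fun j _ => by
      have : (DirectSum.component R ι E i ∘ₗ ψ) (Pi.single j 1) = 0 := h0 j
      rw [this, smul_zero]
  refine DFinsupp.ext fun i => ?_
  have h1 : (∑ j ∈ F, DirectSum.lof R ι E j (ψ x j)) i = ∑ j ∈ F, (DirectSum.lof R ι E j (ψ x j)) i := by
    exact map_sum (DirectSum.component R ι E i) _ _
  rw [h1]
  by_cases hi : i ∈ F
  · rw [Finset.sum_eq_single i]
    · exact DirectSum.of_eq_same _ _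
    · intro j _ hj
      exact DirectSum.of_eq_of_ne _ _ _ hj.symm
    · exact fun h => absurd hi h
  · rw [hsub i hi]
    refine Finset.sum_eq_zero fun j hj => ?_
    exact DirectSum.of_eq_of_ne _ _ _ (by rintro rfl; exact hi hj)

section lim
variable {ι : Type u} [Preorder ι] [IsDirectedOrder ι] [DecidableEq ι] [Nonempty ι]
  {E : ι → Type u} [∀ i, AddCommGroup (E i)] [∀ i, Module R (E i)]
  {f : ∀ i j, i ≤ j → E i →ₗ[R] E j} [DirectedSystem E fun i j h => f i j h]

lemma lim_rep_fin {k : ℕ} (y : Fin k → Module.DirectLimit E f) :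
    ∃ (i : ι) (y' : Fin k → E i), ∀ j, Module.DirectLimit.of R ι E f i (y' j) = y j := by
  choose i x hx using fun j => Module.DirectLimit.exists_of (y j)
  obtain ⟨M, hM⟩ := Finite.exists_le i
  exact ⟨M, fun j => f (i j) M (hM j) (x j), fun j => by rw [Module.DirectLimit.of_f, hx]⟩

lemma lim_zero_fin {k : ℕ} {i : ι} (y : Fin k → E i)
    (hy : ∀ j, Module.DirectLimit.of R ι E f i (y j) = 0) :
    ∃ (i' : ι) (h : i ≤ i'), ∀ j, f i i' h (y j) = 0 := by
  choose i' hi' h' using fun j => Module.DirectLimit.of.zero_exact (hy j)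
  obtain ⟨M, hM⟩ := Finite.exists_le i'
  obtain ⟨N, hMN, hiN⟩ := exists_ge_ge M i
  refine ⟨N, hiN, fun j => ?_⟩
  have := DirectedSystem.map_map' (f := fun i j h => f i j h) (hi' j) ((hM j).trans hMN) (y j)
  rw [← this, h', map_zero]

lemma lim_rep_map {k : ℕ} (φ : (Fin k → R) →ₗ[R] Module.DirectLimit E f) :
    ∃ (i : ι) (φ' : (Fin k → R) →ₗ[R] E i), ∀ x, Module.DirectLimit.of R ι E f i (φ' x) = φ x := by
  obtain ⟨i, y, hy⟩ := lim_rep_fin (fun j => φ (Pi.single j 1))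
  refine ⟨i, Fintype.linearCombination R y, fun x => ?_⟩
  rw [linmap_fin_apply φ x]
  simp [Fintype.linearCombination_apply, hy]

lemma sap_lim_aux {s t : R} (hE : ∀ i, SAP s (E i))
    (ht : ∀ (k n : ℕ) (a : (Fin k → R) →ₗ[R] (Fin n → R)), KT t a) :
    SAP (s * t) (Module.DirectLimit E f) := by
  intro k n a ψ hψ
  obtain ⟨i, φ, hφ⟩ := lim_rep_map ψ
  obtain ⟨l, c, hc1, hc2⟩ := (ht k n a).exists_map
  obtain ⟨i', hi', h0⟩ := lim_zero_fin (fun j => φ (c (Pi.single j 1)))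
    (fun j => by rw [hφ]; exact hψ _ (hc1 _))
  have h1 : ∀ w, f i i' hi' (φ (c w)) = 0 := fun w => by
    have := linmap_fin_apply (f i i' hi' ∘ₗ φ ∘ₗ c) w
    simp only [LinearMap.comp_apply, h0] at this
    simpa using this
  obtain ⟨χ, hχ⟩ := hE i' k n a (t • (f i i' hi' ∘ₗ φ)) (fun x hx => by
    obtain ⟨w, hw⟩ := hc2 x hx
    simp only [LinearMap.smul_apply, LinearMap.comp_apply, ← map_smul, ← hw, h1])
  refine ⟨Module.DirectLimit.of R ι E f i' ∘ₗ χ, fun x => ?_⟩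
  simp [hχ, hφ, mul_smul]

lemma epv_lim : EPv (1 : R) (DirectSum.toModule R ι (Module.DirectLimit E f)
    (fun i => Module.DirectLimit.of R ι E f i)) := by
  intro p k b y hy
  set g := DirectSum.toModule R ι (Module.DirectLimit E f)
    (fun i => Module.DirectLimit.of R ι E f i) with hg
  obtain ⟨i, y', hy'⟩ := lim_rep_fin (fun j => g (y j))
  obtain ⟨i', hi', h0⟩ := lim_zero_fin (f := f) (fun q => ∑ j, b q j • y' j) (fun q => by
    simpa [hy'] using hy q)
  refine ⟨fun j => y j - DirectSum.lof R ι E i' (f i i' hi' (y' j)), fun j => ?_, fun q => ?_⟩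
  · rw [map_sub, hg, DirectSum.toModule_lof, ← hg, Module.DirectLimit.of_f, hy', sub_self]
  · have := h0 q
    simp only [smul_sub, Finset.sum_sub_distrib, one_smul, ← map_smul, ← map_sum, this, map_zero,
      sub_zero]

lemma surj_lim : Function.Surjective (DirectSum.toModule R ι (Module.DirectLimit E f)
    (fun i => Module.DirectLimit.of R ι E f i)) := by
  intro x
  obtain ⟨i, y, rfl⟩ := Module.DirectLimit.exists_of x
  exact ⟨DirectSum.lof R ι E i y, DirectSum.toModule_lof _ _ _⟩

end lim

lemma SAP.of_subsingleton (s : R) {E : Type u} [AddCommGroup E] [Module R E] [Subsingleton E] :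
    SAP s E := fun _ _ _ _ _ => ⟨0, fun _ => Subsingleton.elim _ _⟩

/-- direct limits, any directed index. -/
lemma aap_lim {m : Ideal R} (hm : m * m = m) (hK : KAFG m)
    {ι : Type u} [Preorder ι] [IsDirectedOrder ι] [DecidableEq ι]
    {E : ι → Type u} [∀ i, AddCommGroup (E i)] [∀ i, Module R (E i)]
    {f : ∀ i j, i ≤ j → E i →ₗ[R] E j} [DirectedSystem E fun i j h => f i j h]
    (hE : ∀ i, ∀ s ∈ m, SAP s (E i)) : ∀ s ∈ m, SAP s (Module.DirectLimit E f) := by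
  rcases isEmpty_or_nonempty ι with h | h
  · intro s hs
    have : Subsingleton (Module.DirectLimit E f) := inferInstance
    exact SAP.of_subsingleton s
  · refine ind_m hm ?_ (fun s t => SAP.add)
    intro s hs t ht
    exact sap_lim_aux (fun i => hE i s hs) (fun k n a => hK n k a t ht)

/-- (4) implies (5) -/
lemma four_five {m : Ideal R}
    (h4 : ∀ (A B C : Type u) [AddCommGroup A] [Module R A] [AddCommGroup B] [Module R B]
          [AddCommGroup C] [Module R C],
        ∀ (f : A →ₗ[R] B) (g : B →ₗ[R] C),
          Function.Injective f → Function.Surjective g →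
            LinearMap.range f = LinearMap.ker g → IsPure f →
              IsAbsolutelyPure (R := R) B → IsAlmostAbsolutelyPure m C)
    {ι : Type u} [Preorder ι] [IsDirectedOrder ι] [DecidableEq ι]
    {E : ι → Type u} [∀ i, AddCommGroup (E i)] [∀ i, Module R (E i)]
    {f : ∀ i j, i ≤ j → E i →ₗ[R] E j} [DirectedSystem E fun i j h => f i j h]
    (hE : ∀ i, SAP (1 : R) (E i)) : IsAlmostAbsolutelyPure m (Module.DirectLimit E f) := by
  rcases isEmpty_or_nonempty ι with h | h
  · rw [aap_iff]
    intro s hs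
    have : Subsingleton (Module.DirectLimit E f) := inferInstance
    exact SAP.of_subsingleton s
  · let g := DirectSum.toModule R ι (Module.DirectLimit E f)
      (fun i => Module.DirectLimit.of R ι E f i)
    refine h4 (LinearMap.ker g) _ _ (LinearMap.ker g).subtype g (Submodule.subtype_injective _)
      surj_lim (Submodule.range_subtype _)
      (EPv.isPure (Submodule.subtype_injective _) (Submodule.range_subtype _) epv_lim) ?_
    rw [ap_iff]
    exact SAP.directSum hE

end Part3
section Part4
variable {R : Type u} [CommRing R]

/-- limits of well-ordered chains of injectives are almost absolutely pure -/
def HCond (m : Ideal R) : Prop :=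
  ∀ (ι : Type u) [LinearOrder ι] [WellFoundedLT ι] [Nonempty ι] [NoMaxOrder ι]
    (E : ι → Type u) [∀ i, AddCommGroup (E i)] [∀ i, Module R (E i)]
    (f : ∀ i j, i ≤ j → E i →ₗ[R] E j) [DirectedSystem E fun i j h => f i j h],
    (∀ i, Module.Injective R (E i)) → ∀ s ∈ m, SAP s (Module.DirectLimit E f)

open TensorProduct in
lemma exists_cogenerator (R : Type u) [CommRing R] :
    ∃ (D : ModuleCat.{u} R), Module.Injective R D ∧
      ∀ (X : Type u) [AddCommGroup X] [Module R X] (x : X), (∀ h : X →ₗ[R] D, h x = 0) → x = 0 := by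
  refine ⟨ModuleCat.of R (CharacterModule R), Module.Flat.iff_characterModule_injective.1 inferInstance,
    ?_⟩
  intro X _ _ x hx
  refine CharacterModule.eq_zero_of_character_apply (fun c => ?_)
  have := hx (CharacterModule.curry (CharacterModule.dual (TensorProduct.rid R X).toLinearMap c))
  have h2 := congrArg (fun (t : CharacterModule R) => t 1) this
  have h3 : c (TensorProduct.rid R X (x ⊗ₜ[R] (1 : R))) = 0 := h2
  simpa using h3

/-- functorial injective hull-like embedding -/
abbrev InjE (D : ModuleCat.{u} R) (X : Type u) [AddCommGroup X] [Module R X] : Type u :=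
  (X →ₗ[R] D) → D

def InjE.ev (D : ModuleCat.{u} R) (X : Type u) [AddCommGroup X] [Module R X] :
    X →ₗ[R] InjE D X where
  toFun x h := h x
  map_add' x y := by ext h; simp
  map_smul' r x := by ext h; simp

lemma InjE.injective {D : ModuleCat.{u} R} (hD : Module.Injective R D) (X : Type u)
    [AddCommGroup X] [Module R X] : Module.Injective R (InjE D X) :=
  Module.Injective.pi R (fun _ => D)

def InjE.map (D : ModuleCat.{u} R) {X Y : Type u} [AddCommGroup X] [Module R X]
    [AddCommGroup Y] [Module R Y] (φ : X →ₗ[R] Y) : InjE D X →ₗ[R] InjE D Y :=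
  LinearMap.funLeft R D (fun h : Y →ₗ[R] D => h ∘ₗ φ)

lemma condS_one {s : R} {E : Type u} [AddCommGroup E] [Module R E] (h : SAP s E) {k : ℕ}
    (f : (Fin k → R) →ₗ[R] R) : CondS s f E := by
  intro ψ hψ
  obtain ⟨χ, hχ⟩ := h k 1 (LinearMap.pi (fun _ => f)) ψ (fun x hx => hψ x (congrFun hx 0))
  exact ⟨χ ∘ₗ LinearMap.pi (fun _ => LinearMap.id), fun x => hχ x⟩

lemma chain_core {m : Ideal R} (H : HCond m) {ι : Type u} [LinearOrder ι] [WellFoundedLT ι]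
    [Nonempty ι] [NoMaxOrder ι] {k : ℕ} (f : (Fin k → R) →ₗ[R] R)
    (G : ι → Submodule R (Fin k → R)) (hG : Monotone G) (c : R)
    (hc : ∀ x, f x = 0 → ∃ α, c • x ∈ G α) (s : R) (hs : s ∈ m) :
    ∃ α, ∀ x, f x = 0 → (s * c) • x ∈ G α := by
  obtain ⟨D, hD1, hD2⟩ := exists_cogenerator R
  let X : ι → Type u := fun α => (Fin k → R) ⧸ G α
  let E : ι → Type u := fun α => InjE D (X α)
  let q : ∀ i j, i ≤ j → X i →ₗ[R] X j := fun i j h => Submodule.mapQ _ _ LinearMap.id (hG h)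
  let g : ∀ i j, i ≤ j → E i →ₗ[R] E j := fun i j h => InjE.map D (q i j h)
  have hq1 : ∀ i, q i i le_rfl = LinearMap.id := fun i => by
    apply Submodule.linearMap_qext; ext x; rfl
  have hq2 : ∀ i j l (h1 : i ≤ j) (h2 : j ≤ l), q j l h2 ∘ₗ q i j h1 = q i l (h1.trans h2) := by
    intro i j l h1 h2
    apply Submodule.linearMap_qext; ext x; rfl
  have hsys : DirectedSystem E (fun i j h => g i j h) := by
    constructor
    · intro i x
      funext h
      show x (h ∘ₗ q i i le_rfl) = x h
      rw [hq1]; rfl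
    · intro l j i h1 h2 x
      funext h
      show x ((h ∘ₗ q j l h2) ∘ₗ q i j h1) = x (h ∘ₗ q i l (h1.trans h2))
      rw [← hq2 i j l h1 h2]; rfl
  have hgev : ∀ i j (h : i ≤ j) x, g i j h (InjE.ev D (X i) x) = InjE.ev D (X j) (q i j h x) :=
    fun i j h x => rfl
  have hL := H ι E g (fun i => InjE.injective hD1 _) s hs
  let θ : ∀ α, (Fin k → R) →ₗ[R] E α := fun α => InjE.ev D (X α) ∘ₗ (G α).mkQ
  have hθ : ∀ i j (h : i ≤ j) x, g i j h (θ i x) = θ j x := fun i j h x => rfl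
  obtain ⟨α₀⟩ : Nonempty ι := inferInstance
  let o := Module.DirectLimit.of R ι E g
  have hoθ : ∀ i j x, o i (θ i x) = o j (θ j x) := by
    intro i j x
    rcases le_total i j with h | h
    · rw [← hθ i j h]; exact (Module.DirectLimit.of_f (hij := h)).symm
    · rw [← hθ j i h]; exact Module.DirectLimit.of_f (hij := h)
  let ψ : (Fin k → R) →ₗ[R] Module.DirectLimit E g := c • (o α₀ ∘ₗ θ α₀)
  obtain ⟨χ, hχ⟩ := condS_one hL f ψ (fun x hx => by
    obtain ⟨α, hα⟩ := hc x hx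
    simp only [ψ, LinearMap.smul_apply, LinearMap.comp_apply]
    rw [hoθ α₀ α, ← map_smul, ← map_smul]
    have : (G α).mkQ (c • x) = 0 := (Submodule.Quotient.mk_eq_zero _).2 hα
    simp only [θ, LinearMap.comp_apply, this, map_zero])
  obtain ⟨β, e, he⟩ := Module.DirectLimit.exists_of (χ 1)
  -- compare at stage β
  obtain ⟨α, hα, h0⟩ := lim_zero_fin (f := g)
    (fun j : Fin k => (s * c) • θ β (Pi.single j 1) - f (Pi.single j 1) • e) (fun j => by
      have h1 := hχ (Pi.single j 1)
      have h2 : χ (f (Pi.single j 1)) = f (Pi.single j 1) • χ 1 := by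
        rw [← map_smul, smul_eq_mul, mul_one]
      rw [map_sub, map_smul, map_smul, he, ← h2, h1]
      have := hoθ β α₀ (Pi.single j 1)
      simp only [o] at this
      simp only [ψ, LinearMap.smul_apply, LinearMap.comp_apply, o]
      rw [this, mul_smul, sub_self])
  refine ⟨α, fun x hx => ?_⟩
  have h1 : (s * c) • θ α x = f x • g β α hα e := by
    have : (s * c) • θ α - LinearMap.toSpanSingleton R _ (g β α hα e) ∘ₗ f = 0 := by
      refine LinearMap.pi_ext' fun j => LinearMap.ext_ring ?_
      have := h0 j
      simp only [map_sub, map_smul, hθ] at this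
      simpa using this
    have := LinearMap.congr_fun this x
    simpa [sub_eq_zero] using this
  rw [hx, zero_smul, ← map_smul] at h1
  have h2 : (G α).mkQ ((s * c) • x) = 0 := hD2 _ _ (fun h => congrFun h1 h)
  exact (Submodule.Quotient.mk_eq_zero _).1 h2

open Cardinal in
lemma rho_ind {m : Ideal R} (hm : m * m = m) (H : HCond m) {k : ℕ} (f : (Fin k → R) →ₗ[R] R)
    (ρ : Cardinal.{u}) : ∀ (t : R) (S : Set (Fin k → R)), #S = ρ → (∀ x ∈ S, f x = 0) →
      (∀ x, f x = 0 → t • x ∈ Submodule.span R S) → ∀ v ∈ m, KT (v * t) f := by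
  induction ρ using WellFoundedLT.induction with
  | ind ρ ih =>
  intro t S hS hSf ht
  have hspan : ∀ S' : Set (Fin k → R), (∀ x ∈ S', f x = 0) → ∀ x ∈ Submodule.span R S', f x = 0 := by
    intro S' h x hx
    have : Submodule.span R S' ≤ LinearMap.ker f := Submodule.span_le.2 h
    exact this hx
  rcases lt_or_ge ρ ℵ₀ with hρ | hρ
  · intro v _
    refine KT.mul_left v ⟨Submodule.span R S, ?_, hspan S hSf, ht⟩
    rw [← hS, Cardinal.lt_aleph0_iff_set_finite] at hρ
    exact Submodule.fg_span hρ
  · let ι := ρ.ord.ToType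
    have : NoMaxOrder ι := Cardinal.noMaxOrder hρ
    have hne : Nonempty ι := by
      rw [← Cardinal.mk_ne_zero_iff, mk_ord_toType]
      exact (aleph0_pos.trans_le hρ).ne'
    have : #ι = #S := by rw [mk_ord_toType, hS]
    obtain ⟨e⟩ := Cardinal.eq.1 this
    let T : ι → Set (Fin k → R) := fun α => (fun β => (e β : Fin k → R)) '' Set.Iio α
    let G : ι → Submodule R (Fin k → R) := fun α => Submodule.span R (T α)
    have hTS : ∀ α, ∀ x ∈ T α, f x = 0 := by
      rintro α _ ⟨β, _, rfl⟩
      exact hSf _ (e β).2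
    have hG : Monotone G := fun α β h => Submodule.span_mono
      (Set.image_mono (Set.Iio_subset_Iio h))
    have hcov : ∀ x, f x = 0 → ∃ α, t • x ∈ G α := by
      intro x hx
      rw [← Submodule.mem_iSup_of_directed _ hG.directed_le]
      refine (Submodule.span_le.2 ?_ : Submodule.span R S ≤ _) (ht x hx)
      intro y hy
      obtain ⟨α, hα⟩ := exists_gt (e.symm ⟨y, hy⟩)
      refine Submodule.mem_iSup_of_mem α (Submodule.subset_span ⟨e.symm ⟨y, hy⟩, hα, by simp⟩)
    refine ind_m hm ?_ (fun s t hs ht => by rw [add_mul]; exact hs.add ht)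
    intro w hw v hv
    obtain ⟨α, hα⟩ := chain_core H f G hG t hcov v hv
    have hlt : #(T α) < ρ := mk_image_le.trans_lt (by
      have := mk_Iio_lt α (by simp [ι])
      simpa [ι] using this)
    rw [mul_assoc]
    exact ih _ hlt (v * t) (T α) rfl (hTS α) hα w hw

lemma HCond.kafg1 {m : Ideal R} (hm : m * m = m) (H : HCond m) : KAFG1 m := by
  intro k f t ht
  have := rho_ind hm H f _ 1 (LinearMap.ker f : Set (Fin k → R)) rfl (fun x hx => hx)
    (fun x hx => by rw [one_smul]; exact Submodule.subset_span hx) t ht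
  rwa [mul_one] at this

end Part4
section Tree
variable {R : Type u} [CommRing R]
variable {ι : Type u} [LinearOrder ι]

/-- tree nodes at level `α` -/
abbrev TNode (X : ι → Type u) (α : ι) : Type u := ∀ β : Set.Iio α, X β.1

abbrev TBr (X : ι → Type u) : Type u := ∀ β : ι, X β

/-- truncation of a branch -/
def tr {X : ι → Type u} (ν : TBr X) (α : ι) : TNode X α := fun β => ν β.1

def TNode.restr {X : ι → Type u} {γ : ι} (τ : TNode X γ) {α : ι} (h : α < γ) : TNode X α :=
  fun β => τ ⟨β.1, lt_trans β.2 h⟩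

lemma exists_types [WellFoundedLT ι] (Y P : Type u) : ∃ X : ι → Type u,
    ∀ γ, Nonempty (((TNode X γ × Y) → P) ≃ X γ) := by
  let F : ∀ α : ι, (∀ β, β < α → Type u) → Type u :=
    fun α r => ((∀ β : Set.Iio α, r β.1 β.2) × Y) → P
  let X : ι → Type u := WellFoundedLT.fix F
  have hX : ∀ α, X α = F α (fun β _ => X β) := fun α => WellFoundedLT.fix_eq F α
  exact ⟨X, fun γ => ⟨Equiv.cast (hX γ).symm⟩⟩

lemma tr_eq_of_le {X : ι → Type u} {ν ν' : TBr X} {β γ : ι} (h : β ≤ γ)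
    (h' : tr ν γ = tr ν' γ) : tr ν β = tr ν' β := by
  funext δ
  exact congrFun h' ⟨δ.1, lt_of_lt_of_le δ.2 h⟩

def TSep {X : ι → Type u} (F : Finset (TBr X)) (β : ι) : Prop :=
  ∀ ν ∈ F, ∀ ν' ∈ F, tr ν β = tr ν' β → ν = ν'

lemma TSep.mono {X : ι → Type u} {F : Finset (TBr X)} {β γ : ι} (h : TSep F β) (hβ : β ≤ γ) :
    TSep F γ := fun ν hν ν' hν' h' => h ν hν ν' hν' (tr_eq_of_le hβ h')

variable [Nonempty ι] [NoMaxOrder ι]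

lemma exists_sep {X : ι → Type u} (F : Finset (TBr X)) (β₀ : ι) : ∃ β, β₀ ≤ β ∧ TSep F β := by
  have : ∀ p : F × F, ∃ β, tr p.1.1 β = tr p.2.1 β → p.1.1 = p.2.1 := by
    intro p
    by_cases h : p.1.1 = p.2.1
    · exact ⟨β₀, fun _ => h⟩
    · obtain ⟨δ, hδ⟩ := Function.ne_iff.1 h
      obtain ⟨β, hβ⟩ := exists_gt δ
      exact ⟨β, fun h' => absurd (congrFun h' ⟨δ, hβ⟩) hδ⟩
  choose b hb using this
  obtain ⟨M, hM⟩ := Finite.exists_le b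
  refine ⟨max M β₀, le_max_right _ _, fun ν hν ν' hν' h => ?_⟩
  exact hb (⟨ν, hν⟩, ⟨ν', hν'⟩) (tr_eq_of_le ((hM _).trans (le_max_left _ _)) h)

variable (X : ι → Type u) {E : ι → Type u} [∀ i, AddCommGroup (E i)] [∀ i, Module R (E i)]
  (f : ∀ i j, i ≤ j → E i →ₗ[R] E j) [DirectedSystem E fun i j h => f i j h]

variable (E) in
abbrev TV : Type u := ∀ α, TNode X α → E α

variable {X}
def TGood (F : Finset (TBr X)) (β : ι) (v : TV X E) : Prop :=
  (∀ α τ, (∀ ν ∈ F, tr ν α ≠ τ) → v α τ = 0) ∧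
    ∀ ν ∈ F, ∀ α (h : β ≤ α), v α (tr ν α) = f β α h (v β (tr ν β))

variable {f}
lemma TGood.mono {F F' : Finset (TBr X)} {β β' : ι} {v : TV X E} (h : TGood f F β v)
    (hF : F ⊆ F') (hβ : β ≤ β') (hs : TSep F' β') : TGood f F' β' v := by
  refine ⟨fun α τ hτ => h.1 α τ (fun ν hν => hτ ν (hF hν)), fun ν hν α hα => ?_⟩
  by_cases hνF : ν ∈ F
  · rw [h.2 ν hνF α (hβ.trans hα), h.2 ν hνF β' hβ]
    exact (DirectedSystem.map_map' (f := fun i j h => f i j h) hβ hα _).symm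
  · rw [h.1 α _ (fun ν' hν' h' => hνF ?_), h.1 β' _ (fun ν' hν' h' => hνF ?_), map_zero]
    · rwa [← hs ν' (hF hν') ν hν h']
    · rwa [← hs.mono hα ν' (hF hν') ν hν h']

lemma TGood.common {F F' : Finset (TBr X)} {β β' : ι} {v v' : TV X E} (h : TGood f F β v)
    (h' : TGood f F' β' v') : ∃ F'' β'', F ⊆ F'' ∧ F' ⊆ F'' ∧ β ≤ β'' ∧ β' ≤ β'' ∧ TSep F'' β'' ∧
      TGood f F'' β'' v ∧ TGood f F'' β'' v' := by
  classical
  obtain ⟨γ, hγ, hs⟩ := exists_sep (F ∪ F') (max β β')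
  have h1 := (le_max_left _ _).trans hγ
  have h2 := (le_max_right _ _).trans hγ
  exact ⟨F ∪ F', γ, Finset.subset_union_left, Finset.subset_union_right, h1, h2, hs,
    h.mono Finset.subset_union_left h1 hs, h'.mono Finset.subset_union_right h2 hs⟩

variable (X f)
def TL : Submodule R (TV X E) where
  carrier := {v | ∃ F β, TGood f F β v}
  zero_mem' := by
    obtain ⟨β⟩ : Nonempty ι := inferInstance
    exact ⟨∅, β, fun _ _ _ => rfl, fun ν hν => absurd hν (Finset.notMem_empty _)⟩
  add_mem' := by
    rintro v v' ⟨F, β, h⟩ ⟨F', β', h'⟩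
    obtain ⟨F'', β'', -, -, -, -, -, h1, h2⟩ := h.common h'
    refine ⟨F'', β'', fun α τ hτ => ?_, fun ν hν α hα => ?_⟩
    · simp [h1.1 α τ hτ, h2.1 α τ hτ]
    · simp [h1.2 ν hν α hα, h2.2 ν hν α hα]
  smul_mem' := by
    rintro r v ⟨F, β, h⟩
    refine ⟨F, β, fun α τ hτ => ?_, fun ν hν α hα => ?_⟩
    · simp [h.1 α τ hτ]
    · simp [h.2 ν hν α hα]

variable {X f}
lemma TL.exists_fin {k : ℕ} (v : Fin k → TL X f) :
    ∃ F β, TSep F β ∧ ∀ j, TGood f F β (v j).1 := by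
  classical
  choose F β h using fun j => (v j).2
  obtain ⟨β₀, hβ₀⟩ := Finite.exists_le β
  obtain ⟨γ, hγ, hs⟩ := exists_sep (Finset.univ.biUnion F) β₀
  exact ⟨_, γ, hs, fun j => (h j).mono
    (Finset.subset_biUnion_of_mem F (Finset.mem_univ j)) ((hβ₀ j).trans hγ) hs⟩

lemma TL.sap (hE : ∀ i, SAP (1 : R) (E i)) : SAP (1 : R) (TL X f) := by
  classical
  intro k n a ψ hψ
  obtain ⟨F, β, hs, hF⟩ := TL.exists_fin (fun j => ψ (Pi.single j 1))
  have hF' : ∀ x, TGood f F β (ψ x).1 := by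
    intro x
    have hx : (ψ x).1 = ∑ j, x j • (ψ (Pi.single j 1)).1 := by
      have := congrArg Subtype.val (linmap_fin_apply ψ x)
      simpa using this
    refine ⟨fun α τ hτ => ?_, fun ν hν α hα => ?_⟩
    · rw [hx]
      simp only [Finset.sum_apply, Pi.smul_apply]
      exact Finset.sum_eq_zero fun j _ => by rw [(hF j).1 α τ hτ, smul_zero]
    · rw [hx]
      simp only [Finset.sum_apply, Pi.smul_apply, map_sum, map_smul]
      exact Finset.sum_congr rfl fun j _ => by rw [(hF j).2 ν hν α hα]
  have : ∀ α (τ : TNode X α), ∃ χ : (Fin n → R) →ₗ[R] E α, ∀ x, χ (a x) = (ψ x).1 α τ := by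
    intro α τ
    obtain ⟨χ, hχ⟩ := hE α k n a (LinearMap.proj τ ∘ₗ LinearMap.proj α ∘ₗ (TL X f).subtype ∘ₗ ψ)
      (fun x hx => by simp [hψ x hx])
    exact ⟨χ, fun x => by rw [hχ, one_smul]; rfl⟩
  choose χ hχ using this
  -- the assembled map
  let Z : (Fin n → R) →ₗ[R] TV X E := LinearMap.pi fun α => LinearMap.pi fun τ =>
    if h : ∃ ν ∈ F, tr ν α = τ then
      (if hα : β ≤ α then f β α hα ∘ₗ χ β (tr h.choose β) else χ α τ) else 0
  have hZ0 : ∀ w α τ, (∀ ν ∈ F, tr ν α ≠ τ) → Z w α τ = 0 := by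
    intro w α τ hτ
    have : ¬ ∃ ν ∈ F, tr ν α = τ := fun ⟨ν, h1, h2⟩ => hτ ν h1 h2
    simp [Z, this]
  have hZ1 : ∀ w, ∀ ν ∈ F, ∀ α (hα : β ≤ α), Z w α (tr ν α) = f β α hα (χ β (tr ν β) w) := by
    intro w ν hν α hα
    have h : ∃ ν' ∈ F, tr ν' α = tr ν α := ⟨ν, hν, rfl⟩
    have h' : h.choose = ν := (hs.mono hα) _ h.choose_spec.1 _ hν h.choose_spec.2
    simp only [Z, LinearMap.pi_apply, dif_pos h, dif_pos hα]
    rw [h']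
    rfl
  have hZ2 : ∀ w, ∀ ν ∈ F, ∀ α (hα : ¬ β ≤ α), Z w α (tr ν α) = χ α (tr ν α) w := by
    intro w ν hν α hα
    have h : ∃ ν' ∈ F, tr ν' α = tr ν α := ⟨ν, hν, rfl⟩
    simp only [Z, LinearMap.pi_apply, dif_pos h, dif_neg hα]
  have hid : ∀ i x, f i i le_rfl x = x := fun i x =>
    DirectedSystem.map_self' (f := fun i j h => f i j h) x
  refine ⟨Z.codRestrict (TL X f) (fun w => ⟨F, β, hZ0 w, fun ν hν α hα => ?_⟩), fun x => ?_⟩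
  · rw [hZ1 w ν hν α hα, hZ1 w ν hν β le_rfl, hid]
  · rw [one_smul]
    apply Subtype.ext
    show Z (a x) = (ψ x).1
    funext α τ
    by_cases h : ∃ ν ∈ F, tr ν α = τ
    · obtain ⟨ν, hν, rfl⟩ := h
      by_cases hα : β ≤ α
      · rw [hZ1 _ ν hν α hα, hχ, (hF' x).2 ν hν α hα]
      · rw [hZ2 _ ν hν α hα, hχ]
    · push Not at h
      rw [hZ0 _ _ _ h, (hF' x).1 _ _ h]

variable (f) in
/-- eventual value along the branch -/
def TEv (ν : TBr X) (v : TV X E) (e : Module.DirectLimit E f) : Prop :=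
  ∃ β, ∀ α, β ≤ α → Module.DirectLimit.of R ι E f α (v α (tr ν α)) = e

lemma TEv.unique {ν : TBr X} {v : TV X E} {e e' : Module.DirectLimit E f}
    (h : TEv f ν v e) (h' : TEv f ν v e') : e = e' := by
  obtain ⟨β, hβ⟩ := h
  obtain ⟨β', hβ'⟩ := h'
  rw [← hβ (max β β') (le_max_left _ _), hβ' _ (le_max_right _ _)]

lemma TGood.tev {F : Finset (TBr X)} {β : ι} {v : TV X E} (h : TGood f F β v) {ν : TBr X}
    (hν : ν ∈ F) : TEv f ν v (Module.DirectLimit.of R ι E f β (v β (tr ν β))) :=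
  ⟨β, fun α hα => by rw [h.2 ν hν α hα, Module.DirectLimit.of_f]⟩

lemma TGood.tev_zero {F : Finset (TBr X)} {β : ι} {v : TV X E} (h : TGood f F β v) {ν : TBr X}
    (hν : ν ∉ F) : TEv f ν v 0 := by
  classical
  obtain ⟨γ, hγ, hs⟩ := exists_sep (insert ν F) β
  refine ⟨γ, fun α hα => ?_⟩
  rw [h.1 α _ (fun ν' hν' h' => hν ?_), map_zero]
  have := hs.mono hα ν' (Finset.mem_insert_of_mem hν') ν (Finset.mem_insert_self _ _) h'
  rwa [← this]

lemma TL.exists_tev (v : TL X f) (ν : TBr X) : ∃ e, TEv f ν v.1 e := by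
  obtain ⟨F, β, h⟩ := v.2
  by_cases hν : ν ∈ F
  · exact ⟨_, h.tev hν⟩
  · exact ⟨_, h.tev_zero hν⟩

open Classical in
noncomputable def TL.cval (ν : TBr X) (v : TL X f) : Module.DirectLimit E f :=
  (TL.exists_tev v ν).choose

lemma TL.cval_eq {ν : TBr X} {v : TL X f} {e : Module.DirectLimit E f} (h : TEv f ν v.1 e) :
    TL.cval ν v = e := (TL.exists_tev v ν).choose_spec.unique h

lemma TL.cval_spec (ν : TBr X) (v : TL X f) : TEv f ν v.1 (TL.cval ν v) :=
  (TL.exists_tev v ν).choose_spec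

lemma TL.cval_finite (v : TL X f) : (Function.support (fun ν => TL.cval ν v)).Finite := by
  obtain ⟨F, β, h⟩ := v.2
  refine F.finite_toSet.subset fun ν hν => ?_
  by_contra hc
  exact hν (TL.cval_eq (h.tev_zero hc))

noncomputable def TL.c : TL X f →ₗ[R] (TBr X →₀ Module.DirectLimit E f) where
  toFun v := Finsupp.ofSupportFinite (fun ν => TL.cval ν v) (TL.cval_finite v)
  map_add' v w := by
    ext ν
    refine TL.cval_eq (ν := ν) (v := v + w) ?_
    obtain ⟨β, hβ⟩ := TL.cval_spec ν v
    obtain ⟨β', hβ'⟩ := TL.cval_spec ν w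
    refine ⟨max β β', fun α hα => ?_⟩
    have h1 := hβ α ((le_max_left _ _).trans hα)
    have h2 := hβ' α ((le_max_right _ _).trans hα)
    show _ = TL.cval ν v + TL.cval ν w
    rw [← h1, ← h2, ← map_add]; rfl
  map_smul' r v := by
    ext ν
    refine TL.cval_eq (ν := ν) (v := r • v) ?_
    obtain ⟨β, hβ⟩ := TL.cval_spec ν v
    refine ⟨β, fun α hα => ?_⟩
    show _ = r • TL.cval ν v
    rw [← hβ α hα, ← map_smul]; rfl

lemma TL.c_apply (v : TL X f) (ν : TBr X) : TL.c v ν = TL.cval ν v := rfl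

variable (f) in
open Classical in
/-- element concentrated on the end of a branch -/
noncomputable def TL.U (ν : TBr X) (β : ι) : E β →ₗ[R] TL X f :=
  LinearMap.codRestrict (TL X f)
    (LinearMap.pi fun α => LinearMap.pi fun τ =>
      if h : β ≤ α ∧ tr ν α = τ then f β α h.1 else 0) (fun x => by
    refine ⟨{ν}, β, fun α τ hτ => ?_, fun ν' hν' α hα => ?_⟩
    · have : ¬ (β ≤ α ∧ tr ν α = τ) := fun h => hτ ν (by simp) h.2
      simp [this]
    · rw [Finset.mem_singleton.1 hν']
      show (if h : β ≤ α ∧ tr ν α = tr ν α then f β α h.1 else 0 : E β →ₗ[R] E α) x =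
        f β α hα ((if h : β ≤ β ∧ tr ν β = tr ν β then f β β h.1 else 0 : E β →ₗ[R] E β) x)
      rw [dif_pos ⟨hα, rfl⟩, dif_pos ⟨le_rfl, rfl⟩]
      exact (DirectedSystem.map_map' (f := fun i j h => f i j h) le_rfl hα _).symm)

open Classical in
lemma TL.U_apply_of {ν : TBr X} {β : ι} (x : E β) {α : ι} (h : β ≤ α) :
    (TL.U f ν β x).1 α (tr ν α) = f β α h x := by
  show (if h : β ≤ α ∧ tr ν α = tr ν α then f β α h.1 else 0 : E β →ₗ[R] E α) x = _
  rw [dif_pos ⟨h, rfl⟩]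

open Classical in
lemma TL.U_apply_ne {ν : TBr X} {β : ι} (x : E β) {α : ι} {τ : TNode X α} (h : tr ν α ≠ τ) :
    (TL.U f ν β x).1 α τ = 0 := by
  show (if h : β ≤ α ∧ tr ν α = τ then f β α h.1 else 0 : E β →ₗ[R] E α) x = _
  rw [dif_neg (fun h' => h h'.2)]
  rfl

lemma TL.c_U (ν : TBr X) (β : ι) (x : E β) :
    TL.c (TL.U f ν β x) = Finsupp.single ν (Module.DirectLimit.of R ι E f β x) := by
  classical
  ext ν'
  rw [TL.c_apply]
  by_cases h : ν = ν'
  · subst h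
    rw [Finsupp.single_eq_same]
    exact TL.cval_eq ⟨β, fun α hα => by rw [TL.U_apply_of x hα, Module.DirectLimit.of_f]⟩
  · rw [Finsupp.single_eq_of_ne (fun h' => h h'.symm)]
    obtain ⟨γ, hγ, hs⟩ := exists_sep {ν, ν'} β
    refine TL.cval_eq ⟨γ, fun α hα => ?_⟩
    rw [TL.U_apply_ne x, map_zero]
    intro h'
    exact h (hs.mono hα ν (by simp) ν' (by simp) h')

open Classical in
/-- element supported on a bounded path -/
noncomputable def Td {γ : ι} (τ : TNode X γ) (y : ∀ δ, E δ) : TV X E :=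
  fun α σ => if h : α < γ then (if τ.restr h = σ then y α else 0) else 0

lemma Td_mem (γ : ι) (ν : TBr X) (y : ∀ δ, E δ) : Td (tr ν γ) y ∈ TL X f := by
  refine ⟨{ν}, γ, fun α τ hτ => ?_, fun ν' hν' α hα => ?_⟩
  · have := hτ ν (by simp)
    simp only [Td]
    split_ifs with h1 h2
    · exact absurd h2 this
    · rfl
    · rfl
  · simp [Td, not_lt.2 hα]

lemma TL.kill_aux {P : Type u} [AddCommGroup P] [Module R P] (h : TL X f →ₗ[R] P)
    (hd : ∀ γ (ν : TBr X) (y : ∀ δ, E δ), h ⟨Td (tr ν γ) y, Td_mem γ ν y⟩ = 0) (γ : ι)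
    (F : Finset (TBr X)) : ∀ v : TL X f, (∀ α τ, (∀ ν ∈ F, tr ν α ≠ τ) → v.1 α τ = 0) →
      (∀ α τ, γ ≤ α → v.1 α τ = 0) → h v = 0 := by
  classical
  induction F using Finset.induction_on with
  | empty =>
    intro v hv _
    have : v = 0 := by
      apply Subtype.ext
      funext α τ
      exact hv α τ (by simp)
    rw [this, map_zero]
  | insert ν F _ ih =>
    intro v hv hγ
    let y : ∀ δ, E δ := fun α => v.1 α (tr ν α)
    have h1 := ih (v - ⟨Td (tr ν γ) y, Td_mem γ ν y⟩) (fun α τ hτ => ?_) (fun α τ hα => ?_)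
    · rw [map_sub, hd, sub_zero] at h1
      exact h1
    · show v.1 α τ - Td (tr ν γ) y α τ = 0
      by_cases hα : α < γ
      · by_cases hτν : tr ν α = τ
        · subst hτν
          have : Td (tr ν γ) y α (tr ν α) = y α := by
            simp only [Td, dif_pos hα]
            exact if_pos rfl
          rw [this, sub_self]
        · have : Td (tr ν γ) y α τ = 0 := by
            simp only [Td, dif_pos hα]
            exact if_neg hτν
          rw [this, sub_zero]
          refine hv α τ fun ν' hν' => ?_
          rcases Finset.mem_insert.1 hν' with rfl | h
          · exact hτν
          · exact hτ ν' h
      · simp [Td, hα, hγ α τ (not_lt.1 hα)]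
    · show v.1 α τ - Td (tr ν γ) y α τ = 0
      simp [Td, not_lt.2 hα, hγ α τ hα]

lemma TL.kill {P : Type u} [AddCommGroup P] [Module R P] (h : TL X f →ₗ[R] P)
    (hd : ∀ γ (ν : TBr X) (y : ∀ δ, E δ), h ⟨Td (tr ν γ) y, Td_mem γ ν y⟩ = 0)
    (v : TL X f) (hv : TL.c v = 0) : h v = 0 := by
  obtain ⟨F, β, hF⟩ := v.2
  have h0 : ∀ ν : F, Module.DirectLimit.of R ι E f β (v.1 β (tr ν.1 β)) = 0 := fun ν => by
    rw [← TL.cval_eq (hF.tev ν.2), ← TL.c_apply, hv]; rfl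
  choose g hg hg' using fun ν => Module.DirectLimit.of.zero_exact (h0 ν)
  obtain ⟨M, hM⟩ := Finite.exists_le g
  refine TL.kill_aux h hd (max M β) F v hF.1 (fun α τ hα => ?_)
  by_cases hτ : ∃ ν ∈ F, tr ν α = τ
  · obtain ⟨ν, hν, rfl⟩ := hτ
    have hβα := (le_max_right _ _).trans hα
    have hMα := (le_max_left _ _).trans hα
    rw [hF.2 ν hν α hβα]
    have := DirectedSystem.map_map' (f := fun i j h => f i j h) (hg ⟨ν, hν⟩)
      ((hM ⟨ν, hν⟩).trans hMα) (v.1 β (tr ν β))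
    rw [← this, hg', map_zero]
  · push Not at hτ
    exact hF.1 α τ hτ

end Tree

section TreeMain
variable {R : Type u} [CommRing R]

lemma HCond.of_precover {m : Ideal R}
    (h7 : ∀ (M : Type u) [AddCommGroup M] [Module R M],
        ∃ (E : ModuleCat.{u} R) (f : E →ₗ[R] M), HasAAPPrecoverWith m M E f) : HCond m := by
  classical
  intro ι _ _ _ _ E _ _ f _ hE
  obtain ⟨P, φ, hP, hφ⟩ := h7 (Module.DirectLimit E f)
  obtain ⟨X, hX⟩ := exists_types (ι := ι) (∀ δ, E δ) P
  let e := fun γ => (hX γ).some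
  have hL : IsAlmostAbsolutelyPure m (TL X f) := by
    rw [aap_iff]
    exact fun s _ => SAP.of_one s (TL.sap (fun i => SAP.of_injective (hE i)))
  let G : Set (TBr X) → (TBr X →₀ Module.DirectLimit E f) →ₗ[R] Module.DirectLimit E f :=
    fun z => Finsupp.lsum R (fun ν => if ν ∈ z then LinearMap.id else 0)
  have hG : ∀ z ν x, G z (Finsupp.single ν x) = if ν ∈ z then x else 0 := by
    intro z ν x
    simp only [G, Finsupp.lsum_single]
    split_ifs <;> rfl
  choose h hh using fun z => hφ (TL X f) hL (G z ∘ₗ TL.c)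
  let Φ : Set (TBr X) → TBr X := fun z γ => e γ (fun p =>
    if hd : Td p.1 p.2 ∈ TL X f then h z ⟨Td p.1 p.2, hd⟩ else 0)
  have hΦ : ¬ Function.Injective Φ := Function.cantor_injective Φ
  simp only [Function.Injective, not_forall] at hΦ
  obtain ⟨z, z', hzz, hne⟩ := hΦ
  let h0 : TL X f →ₗ[R] P := h z - h z'
  have hkill : ∀ v, TL.c v = 0 → h0 v = 0 := by
    intro v hv
    refine TL.kill h0 (fun γ ν y => ?_) v hv
    have h1 := (e γ).injective (congrFun hzz γ)
    have h2 := congrFun h1 (tr ν γ, y)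
    simp only [dif_pos (Td_mem (f := f) γ ν y)] at h2
    simp only [h0, LinearMap.sub_apply, h2, sub_self]
  have hφh0 : ∀ v, φ (h0 v) = G z (TL.c v) - G z' (TL.c v) := by
    intro v
    have h1 := LinearMap.congr_fun (hh z) v
    have h2 := LinearMap.congr_fun (hh z') v
    simp only [LinearMap.comp_apply] at h1 h2
    simp only [h0, LinearMap.sub_apply, map_sub, h1, h2]
  obtain ⟨ν, hν⟩ : ∃ ν, ¬ (ν ∈ z ↔ ν ∈ z') := by
    by_contra hc
    push Not at hc
    exact hne (Set.ext hc)
  let σ : Module.DirectLimit E f →ₗ[R] P := Module.DirectLimit.lift R ι E f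
    (fun β => h0 ∘ₗ TL.U f ν β) (fun i j hij x => by
      rw [← sub_eq_zero]
      simp only [LinearMap.comp_apply]
      rw [← map_sub]
      apply hkill
      rw [map_sub, TL.c_U, TL.c_U, Module.DirectLimit.of_f, sub_self])
  have hσ : ∀ β x, φ (σ (Module.DirectLimit.of R ι E f β x)) =
      (if ν ∈ z then Module.DirectLimit.of R ι E f β x else 0) -
      (if ν ∈ z' then Module.DirectLimit.of R ι E f β x else 0) := by
    intro β x
    simp only [σ, Module.DirectLimit.lift_of, LinearMap.comp_apply]
    rw [hφh0, TL.c_U, hG, hG]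
  rw [aap_iff] at hP
  intro s hs
  by_cases hz : ν ∈ z
  · have hz' : ν ∉ z' := fun h => hν ⟨fun _ => h, fun _ => hz⟩
    refine SAP.retract σ φ (fun x => ?_) (hP s hs)
    obtain ⟨β, x, rfl⟩ := Module.DirectLimit.exists_of x
    rw [hσ]; simp [hz, hz']
  · have hz' : ν ∈ z' := by
      by_contra h
      exact hν ⟨fun h' => absurd h' hz, fun h' => absurd h' h⟩
    refine SAP.retract (-σ) φ (fun x => ?_) (hP s hs)
    obtain ⟨β, x, rfl⟩ := Module.DirectLimit.exists_of x
    rw [LinearMap.neg_apply, map_neg, hσ]; simp [hz, hz']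

end TreeMain
section Precover

/-- index terms for the closure construction -/
inductive JT (R : Type u) : Type u
  | base : JT R
  | add : JT R → JT R → JT R
  | smul : R → JT R → JT R
  | sol (l k : ℕ) (A : Fin l → Fin k → R) (i : Fin k) (args : Fin l → JT R) : JT R

/-- terms generating a small quotient -/
inductive WT (R : Type u) [CommRing R] (M : Type u) : Type u
  | zero : WT R M
  | add : WT R M → WT R M → WT R M
  | smul : R → WT R M → WT R M
  | node (W : Set (JT R →₀ R)) (v : JT R → M) (D : Set (JT R)) (j : JT R)
      (args : JT R → WT R M) : WT R M

variable {R : Type u} [CommRing R] {M : Type u} [AddCommGroup M] [Module R M]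
  {E : Type u} [AddCommGroup E] [Module R E]

open Classical in
noncomputable def WT.eval (g : E →ₗ[R] M) : WT R M → E
  | .zero => 0
  | .add a b => a.eval g + b.eval g
  | .smul r a => r • a.eval g
  | .node W v D j args =>
    if h : ∃ s : JT R → E, {p | Finsupp.linearCombination R s p = 0} = W ∧
        (∀ j, g (s j) = v j) ∧ ∀ j ∈ D, s j = (args j).eval g then h.choose j else 0

noncomputable def WT.N (g : E →ₗ[R] M) : Submodule R E where
  carrier := Set.range (WT.eval g)
  zero_mem' := ⟨.zero, by rw [WT.eval]⟩
  add_mem' := by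
    rintro _ _ ⟨a, rfl⟩ ⟨b, rfl⟩
    exact ⟨.add a b, by rw [WT.eval]⟩
  smul_mem' := by
    rintro r _ ⟨a, rfl⟩
    exact ⟨.smul r a, by rw [WT.eval]⟩

lemma WT.closure (g : E →ₗ[R] M) (s : JT R → E) : ∃ s' : JT R → E,
    (∀ j, s' j ∈ WT.N g) ∧ (∀ p, Finsupp.linearCombination R s' p = 0 ↔
      Finsupp.linearCombination R s p = 0) ∧ (∀ j, g (s' j) = g (s j)) ∧
      ∀ j, s j ∈ WT.N g → s' j = s j := by
  classical
  let args : JT R → WT R M := fun j => if h : s j ∈ WT.N g then h.choose else .zero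
  have hargs : ∀ j, s j ∈ WT.N g → (args j).eval g = s j := by
    intro j h
    simp only [args, dif_pos h]
    exact h.choose_spec
  have h : ∃ t : JT R → E, {p | Finsupp.linearCombination R t p = 0} =
      {p | Finsupp.linearCombination R s p = 0} ∧
        (∀ j, g (t j) = g (s j)) ∧ ∀ j ∈ {j | s j ∈ WT.N g}, t j = (args j).eval g :=
    ⟨s, rfl, fun _ => rfl, fun j hj => (hargs j hj).symm⟩
  refine ⟨h.choose, fun j => ?_, fun p => ?_, h.choose_spec.2.1, fun j hj => ?_⟩
  · refine ⟨.node {p | Finsupp.linearCombination R s p = 0} (fun j => g (s j))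
      {j | s j ∈ WT.N g} j args, ?_⟩
    rw [WT.eval, dif_pos h]
  · exact Set.ext_iff.1 h.choose_spec.1 p
  · rw [h.choose_spec.2.2 j hj, hargs j hj]

open Classical in
noncomputable def JT.ev (N : Submodule R E) (e : E) : JT R → E
  | .base => e
  | .add a b => a.ev N e + b.ev N e
  | .smul r a => r • a.ev N e
  | .sol l k A i args =>
    if h : ∃ b : Fin k → E, ∀ i, ∑ j, A i j • b j + (args i).ev N e ∈ N then h.choose i else 0

noncomputable def JT.S (N : Submodule R E) (e : E) : Submodule R E where
  carrier := Set.range (JT.ev N e)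
  zero_mem' := ⟨.smul 0 .base, by rw [JT.ev, zero_smul]⟩
  add_mem' := by
    rintro _ _ ⟨a, rfl⟩ ⟨b, rfl⟩
    exact ⟨.add a b, by rw [JT.ev]⟩
  smul_mem' := by
    rintro r _ ⟨a, rfl⟩
    exact ⟨.smul r a, by rw [JT.ev]⟩

lemma JT.exists_sol (N : Submodule R E) (e : E) {l k : ℕ} (A : Fin l → Fin k → R)
    (args : Fin l → JT R) (h : ∃ b : Fin k → E, ∀ i, ∑ j, A i j • b j + (args i).ev N e ∈ N) :
    ∃ q : Fin k → JT R, ∀ i, ∑ j, A i j • (q j).ev N e + (args i).ev N e ∈ N := by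
  refine ⟨fun i => .sol l k A i args, fun i => ?_⟩
  have : ∀ j, (JT.sol l k A j args).ev N e = h.choose j := by
    intro j
    rw [JT.ev, dif_pos h]
  simp only [this]
  exact h.choose_spec i

lemma JT.lin_mem (N : Submodule R E) (e : E) (p : JT R →₀ R) :
    ∃ d : JT R, JT.ev N e d = Finsupp.linearCombination R (JT.ev N e) p := by
  have h : Finsupp.linearCombination R (JT.ev N e) p ∈ Submodule.span R (Set.range (JT.ev N e)) := by
    rw [← Finsupp.range_linearCombination]
    exact ⟨p, rfl⟩
  have h2 : Submodule.span R (Set.range (JT.ev N e)) ≤ JT.S N e :=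
    Submodule.span_le.2 (fun x hx => hx)
  exact h2 h

/-- equationally pure submodule -/
def EqP (K : Submodule R E) : Prop :=
  ∀ (l k : ℕ) (A : Fin l → Fin k → R) (y : Fin k → E), (∀ i, ∑ j, A i j • y j ∈ K) →
    ∃ z : Fin k → E, (∀ j, z j ∈ K) ∧ ∀ i, ∑ j, A i j • z j = ∑ j, A i j • y j

lemma WT.exists_pure (g : E →ₗ[R] M) (e : E) (he : e ∉ WT.N g) :
    ∃ K : Submodule R E, EqP K ∧ K ≠ ⊥ ∧ K ≤ LinearMap.ker g := by
  set s := JT.ev (WT.N g) e with hs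
  obtain ⟨s', h1, h2, h3, h4⟩ := WT.closure g s
  let σ := Finsupp.linearCombination R s
  let σ' := Finsupp.linearCombination R s'
  have hσ'N : ∀ p, σ' p ∈ WT.N g := fun p => by
    have h : σ' p ∈ Submodule.span R (Set.range s') := by
      rw [← Finsupp.range_linearCombination]
      exact ⟨p, rfl⟩
    refine (Submodule.span_le.2 ?_) h
    rintro _ ⟨j, rfl⟩
    exact h1 j
  let δ := σ' - σ
  have hδ : ∀ p, σ p = 0 → δ p = 0 := fun p hp => by
    have := (h2 p).2 hp
    simp only [δ, LinearMap.sub_apply, hp, sub_zero]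
    exact this
  refine ⟨LinearMap.range δ, ?_, ?_, ?_⟩
  · intro l k A y hy
    choose p hp using hy
    choose d₀ hd₀ using fun i => JT.lin_mem (WT.N g) e (p i)
    obtain ⟨q, hq⟩ := JT.exists_sol (WT.N g) e A d₀ ⟨y, fun i => by
      rw [hd₀, ← hp]
      have : δ (p i) + (Finsupp.linearCombination R (JT.ev (WT.N g) e)) (p i) = σ' (p i) := by
        simp only [δ, LinearMap.sub_apply]
        exact sub_add_cancel _ _
      rw [this]
      exact hσ'N _⟩
    let r : Fin l → JT R →₀ R := fun i => ∑ j, A i j • Finsupp.single (q j) 1 + p i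
    have hr : ∀ i, σ (r i) = ∑ j, A i j • s (q j) + s (d₀ i) := by
      intro i
      simp only [r, map_add, map_sum, map_smul]
      congr 1
      · exact Finset.sum_congr rfl fun j _ => by simp [σ]
      · exact (hd₀ i).symm
    choose d hd using fun i => JT.lin_mem (WT.N g) e (r i)
    have hdN : ∀ i, s (d i) ∈ WT.N g := fun i => by
      have : s (d i) = _ := (hd i).trans (hr i)
      rw [this]
      exact hq i
    have hδd : ∀ i, δ (Finsupp.single (d i) 1) = 0 := fun i => by
      simp [δ, σ, σ', h4 _ (hdN i)]
    have hz : ∀ i, δ (r i) = 0 := fun i => by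
      have := hδ (r i - Finsupp.single (d i) 1) (by
        rw [map_sub, sub_eq_zero]
        have h5 : σ (Finsupp.single (d i) 1) = s (d i) := by simp [σ]
        rw [h5]
        exact (hd i).symm)
      rwa [map_sub, hδd, sub_zero] at this
    refine ⟨fun j => - δ (Finsupp.single (q j) 1), fun j => neg_mem ⟨_, rfl⟩, fun i => ?_⟩
    have := hz i
    simp only [r, map_add, map_sum, map_smul] at this
    rw [← hp, ← neg_eq_of_add_eq_zero_right this]
    simp [smul_neg, Finset.sum_neg_distrib]
  · intro hbot
    have h5 : δ (Finsupp.single .base 1) ∈ LinearMap.range δ := ⟨_, rfl⟩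
    rw [hbot, Submodule.mem_bot] at h5
    simp only [δ, σ, σ', LinearMap.sub_apply, Finsupp.linearCombination_single, one_smul,
      sub_eq_zero] at h5
    apply he
    have h6 : s .base = e := by rw [hs, JT.ev]
    rw [← h6, ← h5]
    exact h1 _
  · rintro _ ⟨p, rfl⟩
    rw [LinearMap.mem_ker]
    have : g ∘ₗ δ = 0 := by
      ext j
      simp [δ, σ, σ', h3]
    exact LinearMap.congr_fun this p

lemma EqP.exists_max (g : E →ₗ[R] M) : ∃ K : Submodule R E, EqP K ∧ K ≤ LinearMap.ker g ∧
    ∀ L : Submodule R E, EqP L → L ≤ LinearMap.ker g → K ≤ L → L ≤ K := by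
  obtain ⟨K, -, hK⟩ := zorn_le_nonempty₀ {K : Submodule R E | EqP K ∧ K ≤ LinearMap.ker g}
    (fun c hc hch K₀ hK₀ => by
      refine ⟨sSup c, ⟨?_, sSup_le fun K hK => (hc hK).2⟩, fun z hz => le_sSup hz⟩
      intro l k A y hy
      have hne : c.Nonempty := ⟨K₀, hK₀⟩
      have hdir : DirectedOn (· ≤ ·) c := hch.directedOn
      have : ∃ K ∈ c, ∀ i, ∑ j, A i j • y j ∈ K := by
        choose K hKc hK using fun i => (Submodule.mem_sSup_of_directed hne hdir).1 (hy i)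
        obtain ⟨L, hL, hL'⟩ : ∃ L ∈ c, ∀ i, K i ≤ L := by
          have : ∀ t : Finset (Fin l), ∃ L ∈ c, ∀ i ∈ t, K i ≤ L := by
            classical
            intro t
            induction t using Finset.induction_on with
            | empty => exact ⟨K₀, hK₀, by simp⟩
            | insert a t _ ih =>
              obtain ⟨L, hL, h⟩ := ih
              obtain ⟨L', hL', h1, h2⟩ := hdir _ hL _ (hKc a)
              refine ⟨L', hL', fun i hi => ?_⟩
              rcases Finset.mem_insert.1 hi with rfl | hi
              · exact h2
              · exact (h i hi).trans h1
          obtain ⟨L, hL, h⟩ := this Finset.univ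
          exact ⟨L, hL, fun i => h i (Finset.mem_univ _)⟩
        exact ⟨L, hL, fun i => hL' i (hK i)⟩
      obtain ⟨K, hKc, hK⟩ := this
      obtain ⟨z, hz, hz'⟩ := (hc hKc).1 l k A y hK
      exact ⟨z, fun j => le_sSup hKc (hz j), hz'⟩) ⊥
    ⟨fun l k A y hy => ⟨0, fun _ => Submodule.zero_mem _, fun i => by
      rw [(Submodule.mem_bot R).1 (hy i)]; simp⟩, bot_le⟩
  exact ⟨K, hK.prop.1, hK.prop.2, fun L h1 h2 h3 => hK.le_of_ge ⟨h1, h2⟩ h3⟩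

lemma EqP.comap {K : Submodule R E} (hK : EqP K) {L : Submodule R (E ⧸ K)} (hL : EqP L) :
    EqP (L.comap K.mkQ) := by
  intro l k A y hy
  obtain ⟨z, hz, hz'⟩ := hL l k A (fun j => K.mkQ (y j)) (fun i => by
    have := hy i
    simpa only [Submodule.mem_comap, map_sum, map_smul] using this)
  choose w hw using fun j => K.mkQ_surjective (z j)
  obtain ⟨v, hv, hv'⟩ := hK l k A (fun j => y j - w j) (fun i => by
    rw [← Submodule.ker_mkQ K, LinearMap.mem_ker]
    simp only [map_sum, map_smul, map_sub, hw, smul_sub, Finset.sum_sub_distrib]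
    rw [hz' i, sub_self])
  refine ⟨fun j => w j + v j, fun j => ?_, fun i => ?_⟩
  · rw [Submodule.mem_comap, map_add, hw]
    have : K.mkQ (v j) = 0 := by
      rw [← LinearMap.mem_ker, Submodule.ker_mkQ]
      exact hv j
    rw [this, add_zero]
    exact hz j
  · simp only [smul_add, Finset.sum_add_distrib]
    rw [hv']
    simp only [smul_sub, Finset.sum_sub_distrib]
    abel

lemma exists_small_quotient (g : E →ₗ[R] M) : ∃ (K : Submodule R E) (g' : E ⧸ K →ₗ[R] M),
    EqP K ∧ g' ∘ₗ K.mkQ = g ∧ Function.Surjective (WT.eval g') := by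
  obtain ⟨K, hK, hKg, hmax⟩ := EqP.exists_max g
  refine ⟨K, K.liftQ g hKg, hK, K.liftQ_mkQ g hKg, ?_⟩
  intro e
  by_contra hc
  obtain ⟨L, hL, hne, hLg⟩ := WT.exists_pure (K.liftQ g hKg) e (fun h => hc h)
  apply hne
  have h1 := hmax (L.comap K.mkQ) (hK.comap hL) (fun x hx => by
    have := hLg hx
    rw [LinearMap.mem_ker] at this ⊢
    simpa using this) (fun x hx => by
      rw [Submodule.mem_comap]
      have : K.mkQ x = 0 := by
        rw [← LinearMap.mem_ker, Submodule.ker_mkQ]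
        exact hx
      rw [this]
      exact L.zero_mem)
  rw [eq_bot_iff]
  intro x hx
  obtain ⟨x, rfl⟩ := K.mkQ_surjective x
  rw [Submodule.mem_bot, ← LinearMap.mem_ker, Submodule.ker_mkQ]
  exact h1 hx

lemma EqP.epv {K : Submodule R E} (hK : EqP K) (r : R) : EPv r K.mkQ := by
  intro p k b y hy
  obtain ⟨z, hz, hz'⟩ := hK p k b y (fun i => by
    rw [← Submodule.ker_mkQ K, LinearMap.mem_ker]; exact hy i)
  refine ⟨fun j => r • z j, fun j => ?_, fun i => ?_⟩
  · rw [← LinearMap.mem_ker, Submodule.ker_mkQ]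
    exact K.smul_mem _ (hz j)
  · rw [← hz', Finset.smul_sum]
    exact Finset.sum_congr rfl fun j _ => smul_comm _ _ _

variable (M) in
/-- index type for the precover -/
structure PIdx (m : Ideal R) : Type u where
  r : Setoid (WT R M)
  a : AddCommGroup (Quotient r)
  d : Module R (Quotient r)
  φ : Quotient r →ₗ[R] M
  h : ∀ s ∈ m, SAP s (Quotient r)

open DirectSum in
lemma exists_precover {m : Ideal R} (hm : m * m = m) (hK : KAFG m) :
    ∃ (E : ModuleCat.{u} R) (f : E →ₗ[R] M), HasAAPPrecoverWith m M E f := by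
  classical
  letI : ∀ i : PIdx M m, AddCommGroup (Quotient i.r) := fun i => i.a
  letI : ∀ i : PIdx M m, Module R (Quotient i.r) := fun i => i.d
  let F : (⨁ i : PIdx M m, Quotient i.r) →ₗ[R] M := DirectSum.toModule R _ M fun i => i.φ
  refine ⟨ModuleCat.of R (⨁ i : PIdx M m, Quotient i.r), F, ?_, ?_⟩
  · rw [aap_iff]
    exact fun s hs => SAP.directSum (fun i => i.h s hs)
  · intro E' _ _ hE' g
    rw [aap_iff] at hE'
    obtain ⟨K, g', hK', hg', hsurj⟩ := exists_small_quotient g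
    have hQ : ∀ s ∈ m, SAP s (E' ⧸ K) :=
      aap_of_epv hm hK K.mkQ K.mkQ_surjective hE' (fun s _ => hK'.epv s)
    let r : Setoid (WT R M) := Setoid.ker (WT.eval g')
    let e : Quotient r ≃ E' ⧸ K := Setoid.quotientKerEquivOfSurjective _ hsurj
    letI a : AddCommGroup (Quotient r) := e.addCommGroup
    letI d : Module R (Quotient r) := e.module R
    let el : Quotient r ≃ₗ[R] E' ⧸ K := e.linearEquiv R
    let i : PIdx M m := ⟨r, a, d, g' ∘ₗ el.toLinearMap, fun s hs =>
      SAP.retract el.toLinearMap el.symm.toLinearMap (fun x => by simp) (hQ s hs)⟩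
    refine ⟨DirectSum.lof R (PIdx M m) (fun i => Quotient i.r) i ∘ₗ el.symm.toLinearMap ∘ₗ K.mkQ, ?_⟩
    rw [← hg']
    ext x
    symm
    show F (DirectSum.lof R (PIdx M m) (fun i => Quotient i.r) i (el.symm (K.mkQ x))) = _
    simp only [F, DirectSum.toModule_lof]
    show g' (el (el.symm (K.mkQ x))) = _
    rw [LinearEquiv.apply_symm_apply]
    rfl

end Precover
section Cover

lemma wf_choice {J : Type u} [LinearOrder J] [WellFoundedLT J] {T : Type u} [Inhabited T]
    (P : J → (J → T) → T → Prop)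
    (hloc : ∀ β u u', (∀ γ, γ < β → u γ = u' γ) → ∀ q, P β u q → P β u' q) :
    ∃ u : J → T, ∀ β, (∃ q, P β u q) → P β u (u β) := by
  classical
  let ext : ∀ β : J, (∀ γ, γ < β → T) → J → T := fun β r γ => if h : γ < β then r γ h else default
  let F : ∀ β : J, (∀ γ, γ < β → T) → T := fun β r =>
    if h : ∃ q, P β (ext β r) q then h.choose else default
  let u : J → T := WellFoundedLT.fix F
  have hu : ∀ β, u β = F β (fun γ _ => u γ) := fun β => WellFoundedLT.fix_eq F β
  refine ⟨u, fun β ⟨q, hq⟩ => ?_⟩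
  have hext : ∀ γ, γ < β → ext β (fun γ _ => u γ) γ = u γ := fun γ hγ => by simp [ext, hγ]
  have h : ∃ q, P β (ext β (fun γ _ => u γ)) q :=
    ⟨q, hloc β u _ (fun γ hγ => (hext γ hγ).symm) q hq⟩
  have h2 : u β = h.choose := by
    rw [hu β]
    exact dif_pos h
  rw [h2]
  exact hloc β _ u hext _ h.choose_spec

variable {R : Type u} [CommRing R] {M : Type u} [AddCommGroup M] [Module R M]
  {F : Type u} [AddCommGroup F] [Module R F]

lemma exists_colim {m : Ideal R} (hm : m * m = m) (hK : KAFG m) (hF : ∀ s ∈ m, SAP s F)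
    (φ : F →ₗ[R] M) {I : Type u} [LinearOrder I] [Nonempty I] (u : I → I → F →ₗ[R] F)
    (hu : ∀ a b, a < b → φ ∘ₗ u b a = φ)
    (hc : ∀ a b c, a < b → b < c → u c b ∘ₗ u b a = u c a) :
    ∃ (X : ModuleCat.{u} R) (of : I → F →ₗ[R] X) (ψ : X →ₗ[R] M), (∀ s ∈ m, SAP s X) ∧
      (∀ a b, a < b → of b ∘ₗ u b a = of a) ∧ (∀ a, ψ ∘ₗ of a = φ) ∧
      (∀ x : X, ∃ a y, of a y = x) ∧
      ∀ a y, of a y = 0 → y = 0 ∨ ∃ b, a < b ∧ u b a y = 0 := by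
  classical
  let f : ∀ i j : I, i ≤ j → F →ₗ[R] F := fun i j _ => if i = j then LinearMap.id else u j i
  have hf1 : ∀ i h, f i i h = LinearMap.id := fun i h => if_pos rfl
  have hf2 : ∀ i j h, i < j → f i j h = u j i := fun i j h hlt => if_neg hlt.ne
  haveI : DirectedSystem (fun _ : I => F) fun i j h => f i j h := by
    refine ⟨fun i x => ?_, fun k j i hij hjk x => ?_⟩
    · rw [hf1 _ le_rfl]; rfl
    · rcases hij.eq_or_lt with rfl | h1
      · rw [hf1 _ le_rfl]; rfl
      · rcases hjk.eq_or_lt with rfl | h2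
        · rw [hf1 _ le_rfl]; rfl
        · rw [hf2 _ _ h1.le h1, hf2 _ _ h2.le h2, hf2 _ _ (h1.trans h2).le (h1.trans h2)]
          exact LinearMap.congr_fun (hc _ _ _ h1 h2) x
  have hφf : ∀ i j h x, φ (f i j h x) = φ x := by
    intro i j h x
    rcases h.eq_or_lt with rfl | h1
    · rw [hf1 _ le_rfl]; rfl
    · rw [hf2 _ _ h1.le h1]
      exact LinearMap.congr_fun (hu _ _ h1) x
  refine ⟨ModuleCat.of R (Module.DirectLimit (fun _ : I => F) f),
    fun a => Module.DirectLimit.of R I (fun _ => F) f a,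
    Module.DirectLimit.lift R I (fun _ => F) f (fun _ => φ) hφf,
    aap_lim hm hK (fun _ => hF), fun a b hab => ?_, fun a => ?_, fun x => ?_, fun a y h => ?_⟩
  · ext x
    rw [← hf2 a b hab.le hab]
    exact Module.DirectLimit.of_f (hij := hab.le)
  · ext x
    exact Module.DirectLimit.lift_of (G := fun _ : I => F) (f := f) (fun _ => φ) hφf x
  · exact Module.DirectLimit.exists_of x
  · obtain ⟨b, hab, hb⟩ := Module.DirectLimit.of.zero_exact h
    rcases hab.eq_or_lt with rfl | h1
    · left
      rw [hf1 _ le_rfl] at hb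
      exact hb
    · right
      rw [hf2 _ _ h1.le h1] at hb
      exact ⟨b, h1, hb⟩

/-- compatible families over `φ` below `β` -/
def CF (φ : F →ₗ[R] M) {J : Type u} [LinearOrder J] (β : J) (u : J → J → F →ₗ[R] F)
    (q : J → F →ₗ[R] F) : Prop :=
  (∀ α, α < β → φ ∘ₗ q α = φ) ∧ ∀ α γ, α < γ → γ < β → q γ ∘ₗ u γ α = q α

/-- the lifting property -/
def Lifts (m : Ideal R) (φ : F →ₗ[R] M) : Prop :=
  ∀ (X : Type u) [AddCommGroup X] [Module R X], (∀ s ∈ m, SAP s X) →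
    ∀ g : X →ₗ[R] M, ∃ h : X →ₗ[R] F, φ ∘ₗ h = g

lemma exists_chain {m : Ideal R} (hm : m * m = m) (hK : KAFG m) (hF : ∀ s ∈ m, SAP s F)
    (φ : F →ₗ[R] M) (hφ : Lifts m φ) {J : Type u} [LinearOrder J] [WellFoundedLT J]
    (Sp : J → (J → J → F →ₗ[R] F) → (J → F →ₗ[R] F) → Prop)
    (hloc : ∀ β u u', (∀ γ, γ < β → u γ = u' γ) → ∀ q, Sp β u q ↔ Sp β u' q) :
    ∃ u : J → J → F →ₗ[R] F, ∀ β, CF φ β u (u β) ∧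
      ((∃ q, CF φ β u q ∧ Sp β u q) → Sp β u (u β)) := by
  have hCloc : ∀ (β : J) u u', (∀ γ, γ < β → u γ = u' γ) → ∀ q, CF φ β u q ↔ CF φ β u' q := by
    intro β u u' h q
    refine and_congr Iff.rfl (forall_congr' fun α => forall_congr' fun γ => forall_congr' fun h1 =>
      forall_congr' fun h2 => ?_)
    rw [h γ h2]
  obtain ⟨u, hu⟩ := wf_choice (J := J) (T := J → F →ₗ[R] F)
    (fun β u q => CF φ β u q ∧ (Sp β u q ∨ ¬ ∃ q', CF φ β u q' ∧ Sp β u q'))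
    (fun β u u' h q hq => by
      simpa only [hCloc β u u' h, hloc β u u' h] using hq)
  refine ⟨u, fun β => ?_⟩
  have hex : ∀ β, (∃ q, CF φ β u q) → CF φ β u (u β) ∧
      ((∃ q, CF φ β u q ∧ Sp β u q) → Sp β u (u β)) := by
    rintro β ⟨q, hq⟩
    by_cases h : ∃ q', CF φ β u q' ∧ Sp β u q'
    · obtain ⟨q', h1, h2⟩ := h
      have := hu β ⟨q', h1, Or.inl h2⟩
      refine ⟨this.1, fun h3 => this.2.resolve_right (not_not.2 h3)⟩
    · have := hu β ⟨q, hq, Or.inr h⟩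
      exact ⟨this.1, fun h3 => absurd h3 h⟩
  induction β using WellFoundedLT.induction with
  | ind β ih =>
    apply hex
    rcases isEmpty_or_nonempty (Set.Iio β) with hI | hI
    · exact ⟨0, fun α hα => (hI.false ⟨α, hα⟩).elim, fun α γ _ h => (hI.false ⟨γ, h⟩).elim⟩
    · obtain ⟨X, of, ψ, hX, h1, h2, -, -⟩ := exists_colim hm hK hF φ (I := Set.Iio β)
        (fun a b => u a.1 b.1) (fun a b hab => (ih b.1 b.2).1.1 a.1 hab)
        (fun a b c hab hbc => (ih c.1 c.2).1.2 a.1 b.1 hab hbc)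
      obtain ⟨p, hp⟩ := hφ X hX ψ
      classical
      let q : J → F →ₗ[R] F := fun α => if h : α < β then p ∘ₗ of ⟨α, h⟩ else 0
      have hq : ∀ α (h : α < β), q α = p ∘ₗ of ⟨α, h⟩ := fun α h => dif_pos h
      refine ⟨q, fun α hα => ?_, fun α γ h3 h4 => ?_⟩
      · rw [hq α hα, ← LinearMap.comp_assoc, hp, h2]
      · rw [hq γ h4, hq α (h3.trans h4), LinearMap.comp_assoc]
        rw [← h1 ⟨α, h3.trans h4⟩ ⟨γ, h4⟩ h3]

lemma bdd_small (κ : Cardinal.{u}) (hκ : Cardinal.aleph0 ≤ κ)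
    (S : Set (Order.succ κ).ord.ToType) (hS : Cardinal.mk S ≤ κ) : ∃ b, ∀ s ∈ S, s < b := by
  by_contra hc
  push Not at hc
  have hIic : ∀ s : (Order.succ κ).ord.ToType, Cardinal.mk (Set.Iic s) ≤ κ := by
    intro s
    have h1 : Cardinal.mk (Set.Iio s) < Order.succ κ := by
      simpa using Cardinal.mk_Iio_lt s (by simp)
    have h2 : Cardinal.mk (Set.Iio s) ≤ κ := Order.lt_succ_iff.1 h1
    rw [← Set.Iio_insert]
    refine (Cardinal.mk_insert_le).trans ?_
    exact Cardinal.add_le_of_le hκ h2 (Cardinal.one_le_aleph0.trans hκ)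
  have huniv : (Set.univ : Set (Order.succ κ).ord.ToType) ⊆ ⋃ s : S, Set.Iic s.1 := by
    intro b _
    obtain ⟨s, hs, h⟩ := hc b
    exact Set.mem_iUnion.2 ⟨⟨s, hs⟩, h⟩
  have h1 : Order.succ κ ≤ κ := calc
    Order.succ κ = Cardinal.mk (Set.univ : Set (Order.succ κ).ord.ToType) := by
      rw [Cardinal.mk_univ, Cardinal.mk_ord_toType]
    _ ≤ Cardinal.mk (⋃ s : S, Set.Iic s.1) := Cardinal.mk_le_mk_of_subset huniv
    _ ≤ Cardinal.sum (fun s : S => Cardinal.mk (Set.Iic s.1)) := Cardinal.mk_iUnion_le_sum_mk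
    _ ≤ Cardinal.sum (fun _ : S => κ) := Cardinal.sum_le_sum _ _ (fun s => hIic s.1)
    _ = Cardinal.mk S * κ := by simp
    _ ≤ κ * κ := mul_le_mul_left hS κ
    _ = κ := Cardinal.mul_eq_self hκ
  exact absurd h1 (not_le.2 (Order.lt_succ κ))

lemma no_regressive (κ : Cardinal.{u}) (hκ : Cardinal.aleph0 ≤ κ) {F : Type u}
    (hF : Cardinal.mk F ≤ κ)
    (a : (Order.succ κ).ord.ToType → (Order.succ κ).ord.ToType)
    (x : (Order.succ κ).ord.ToType → F) (b₀ : (Order.succ κ).ord.ToType)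
    (ha : ∀ β, b₀ < β → a β < β)
    (hinj : ∀ β β', b₀ < β → b₀ < β' → a β = a β' → x β = x β' → β = β') : False := by
  have hT : ∀ b, Cardinal.mk {β | b₀ < β ∧ a β ≤ b} ≤ κ := by
    intro b
    have h1 : Cardinal.mk (Set.Iio b) < Order.succ κ := by
      simpa using Cardinal.mk_Iio_lt b (by simp)
    have h2 : Cardinal.mk (Set.Iio b) ≤ κ := Order.lt_succ_iff.1 h1
    have h3 : Cardinal.mk (Set.Iic b) ≤ κ := by
      rw [← Set.Iio_insert]
      refine (Cardinal.mk_insert_le).trans ?_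
      exact Cardinal.add_le_of_le hκ h2 (Cardinal.one_le_aleph0.trans hκ)
    have h4 : Cardinal.mk {β | b₀ < β ∧ a β ≤ b} ≤ Cardinal.mk (Set.Iic b × F) := by
      refine Cardinal.mk_le_of_injective (f := fun β => (⟨a β.1, β.2.2⟩, x β.1)) ?_
      intro β β' h
      have hh1 := congrArg (fun p => (p.1 : (Order.succ κ).ord.ToType)) h
      have hh2 := congrArg Prod.snd h
      exact Subtype.ext (hinj _ _ β.2.1 β'.2.1 hh1 hh2)
    refine h4.trans ?_
    rw [Cardinal.mk_prod, Cardinal.lift_id, Cardinal.lift_id]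
    exact (mul_le_mul' h3 hF).trans (Cardinal.mul_eq_self hκ).le
  choose c hc using fun b => bdd_small κ hκ (insert b {β | b₀ < β ∧ a β ≤ b})
    ((Cardinal.mk_insert_le).trans
      (Cardinal.add_le_of_le hκ (hT b) (Cardinal.one_le_aleph0.trans hκ)))
  let b : ℕ → (Order.succ κ).ord.ToType := fun n => c^[n] b₀
  have hb : ∀ n, b (n + 1) = c (b n) := fun n => Function.iterate_succ_apply' c n b₀
  obtain ⟨d, hd⟩ := bdd_small κ hκ (Set.range b)
    ((Set.countable_range b).le_aleph0.trans hκ)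
  obtain ⟨γ, hγ, hmin⟩ := WellFounded.has_min (wellFounded_lt (α := (Order.succ κ).ord.ToType))
    {d | ∀ n, b n < d} ⟨d, fun n => hd _ ⟨n, rfl⟩⟩
  have h0 : b₀ < γ := hγ 0
  have h1 : ∃ n, a γ ≤ b n := by
    by_contra hcon
    push Not at hcon
    exact hmin (a γ) hcon (ha γ h0)
  obtain ⟨n, hn⟩ := h1
  have h2 : γ < c (b n) := hc (b n) γ (Or.inr ⟨h0, hn⟩)
  rw [← hb] at h2
  exact lt_asymm h2 (hγ (n + 1))

/-- Step A: a precover all of whose maps over `M` are injective. -/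
lemma exists_mono_precover {m : Ideal R} (hm : m * m = m) (hK : KAFG m) (hF : ∀ s ∈ m, SAP s F)
    (φ : F →ₗ[R] M) (hφ : Lifts m φ) : ∃ (X : ModuleCat.{u} R) (ψ : X →ₗ[R] M),
      (∀ s ∈ m, SAP s X) ∧ Lifts m ψ ∧ ∀ h : X →ₗ[R] X, ψ ∘ₗ h = ψ → Function.Injective h := by
  classical
  let κ : Cardinal.{u} := max (Cardinal.mk F) Cardinal.aleph0
  have hκ : Cardinal.aleph0 ≤ κ := le_max_right _ _
  let J := (Order.succ κ).ord.ToType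
  have hJ : Nonempty J := by
    rw [← Cardinal.mk_ne_zero_iff]
    show Cardinal.mk (Order.succ κ).ord.ToType ≠ 0
    rw [Cardinal.mk_ord_toType]
    exact (Cardinal.succ_pos κ).ne'
  obtain ⟨b₀⟩ := hJ
  let Sp : J → (J → J → F →ₗ[R] F) → (J → F →ₗ[R] F) → Prop := fun β u q =>
    ∃ α, α < β ∧ ∃ x, x ≠ 0 ∧ q α x = 0 ∧ ∀ δ, α < δ → δ < β → u δ α x ≠ 0
  obtain ⟨u, hu⟩ := exists_chain hm hK hF φ hφ Sp (by
    intro β u u' h q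
    refine exists_congr fun α => and_congr Iff.rfl (exists_congr fun x => and_congr Iff.rfl
      (and_congr Iff.rfl (forall_congr' fun δ => forall_congr' fun h1 => forall_congr' fun h2 => ?_)))
    rw [h δ h2])
  by_cases hall : ∀ β, b₀ < β → ∃ q, CF φ β u q ∧ Sp β u q
  · exfalso
    have hsp : ∀ β, b₀ < β → Sp β u (u β) := fun β hβ => (hu β).2 (hall β hβ)
    have hsp' : ∀ β : J, ∃ (α : J) (x : F), b₀ < β → α < β ∧ x ≠ 0 ∧ u β α x = 0 ∧
        ∀ δ, α < δ → δ < β → u δ α x ≠ 0 := by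
      intro β
      by_cases hβ : b₀ < β
      · obtain ⟨α, h1, x, h2⟩ := hsp β hβ
        exact ⟨α, x, fun _ => ⟨h1, h2⟩⟩
      · exact ⟨β, 0, fun h => absurd h hβ⟩
    choose a x hax using hsp'
    refine no_regressive κ hκ (le_max_left _ _) a x b₀ (fun β hβ => (hax β hβ).1) ?_
    intro β β' hβ hβ' h1 h2
    obtain ⟨p1, p2, p3, p4⟩ := hax β hβ
    obtain ⟨q1, q2, q3, q4⟩ := hax β' hβ'
    rcases lt_trichotomy β β' with h | h | h
    · rw [← h1, ← h2] at q4
      exact absurd p3 (q4 β p1 h)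
    · exact h
    · rw [h1, h2] at p4
      exact absurd q3 (p4 β' q1 h)
  · push Not at hall
    obtain ⟨β, hβ, hno⟩ := hall
    haveI : Nonempty (Set.Iio β) := ⟨⟨b₀, hβ⟩⟩
    obtain ⟨X, of, ψ, hX, h1, h2, h3, h4⟩ := exists_colim hm hK hF φ (I := Set.Iio β)
      (fun a b => u a.1 b.1) (fun a b hab => (hu b.1).1.1 a.1 hab)
      (fun a b c hab hbc => (hu c.1).1.2 a.1 b.1 hab hbc)
    have hinj : ∀ p : X →ₗ[R] F, φ ∘ₗ p = ψ → Function.Injective p := by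
      intro p hp
      rw [injective_iff_map_eq_zero]
      intro x hx
      by_contra hx0
      let q : J → F →ₗ[R] F := fun α => if h : α < β then p ∘ₗ of ⟨α, h⟩ else 0
      have hq : ∀ α (h : α < β), q α = p ∘ₗ of ⟨α, h⟩ := fun α h => dif_pos h
      refine hno q ⟨fun α hα => ?_, fun α γ h5 h6 => ?_⟩ ?_
      · rw [hq α hα, ← LinearMap.comp_assoc, hp, h2]
      · rw [hq γ h6, hq α (h5.trans h6), LinearMap.comp_assoc]
        rw [← h1 ⟨α, h5.trans h6⟩ ⟨γ, h6⟩ h5]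
      · obtain ⟨α, y, rfl⟩ := h3 x
        refine ⟨α.1, α.2, y, fun hy => hx0 (by rw [hy, map_zero]), ?_, fun δ h5 h6 h7 => hx0 ?_⟩
        · rw [hq α.1 α.2]; exact hx
        · rw [← h1 α ⟨δ, h6⟩ h5]
          simp [h7]
    refine ⟨X, ψ, hX, ?_, fun h hh => ?_⟩
    · intro Y _ _ hY g
      obtain ⟨k, hk⟩ := hφ Y hY g
      refine ⟨of ⟨b₀, hβ⟩ ∘ₗ k, ?_⟩
      rw [← LinearMap.comp_assoc, h2, hk]
    · obtain ⟨p, hp⟩ := hφ X hX ψ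
      have := hinj (p ∘ₗ h) (by rw [← LinearMap.comp_assoc, hp, hh])
      exact Function.Injective.of_comp (f := p) this

/-- Step B -/
lemma surjective_of_mono {m : Ideal R} (hm : m * m = m) (hK : KAFG m) (hF : ∀ s ∈ m, SAP s F)
    (φ : F →ₗ[R] M) (hφ : Lifts m φ)
    (hinj : ∀ h : F →ₗ[R] F, φ ∘ₗ h = φ → Function.Injective h)
    (h : F →ₗ[R] F) (hh : φ ∘ₗ h = φ) : Function.Surjective h := by
  by_contra hns
  simp only [Function.Surjective, not_forall, not_exists] at hns
  obtain ⟨y₀, hy₀⟩ := hns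
  let J := (Cardinal.mk (Set F)).ord.ToType
  have ⟨e⟩ : Nonempty (Set F ≃ J) := Cardinal.eq.1 (Cardinal.mk_ord_toType _).symm
  obtain ⟨u, hu⟩ := exists_chain hm hK hF φ hφ (J := WithTop J)
    (fun β _ q => ∃ y, ∀ α, α < β → ∀ x, q α x ≠ y) (fun _ _ _ _ _ => Iff.rfl)
  have hsp : ∀ β : WithTop J, ∃ y, ∀ α, α < β → ∀ x, u β α x ≠ y := by
    intro β
    refine (hu β).2 ⟨fun α => h ∘ₗ u β α, ⟨fun α hα => ?_, fun α γ h1 h2 => ?_⟩,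
      y₀, fun α hα x => hy₀ _⟩
    · rw [← LinearMap.comp_assoc, hh, (hu β).1.1 α hα]
    · rw [LinearMap.comp_assoc, (hu β).1.2 α γ h1 h2]
  choose y hy using hsp
  have key : ∀ a b : J, a < b → u ⊤ (a : WithTop J) (y a) ≠ u ⊤ (b : WithTop J) (y b) := by
    intro a b hab heq
    have hab' : (a : WithTop J) < b := WithTop.coe_lt_coe.2 hab
    have h1 := (hu ⊤).1.2 a b hab' (WithTop.coe_lt_top b)
    rw [← h1] at heq
    have h2 := hinj _ ((hu ⊤).1.1 b (WithTop.coe_lt_top b)) heq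
    exact hy b a hab' _ h2
  refine Function.cantor_injective (fun a : Set F => u ⊤ (e a : WithTop J) (y (e a))) ?_
  intro a b hab
  rcases lt_trichotomy (e a) (e b) with h' | h' | h'
  · exact absurd hab (key _ _ h')
  · exact e.injective h'
  · exact absurd hab.symm (key _ _ h')

lemma exists_cover {m : Ideal R} (hm : m * m = m) (hK : KAFG m) :
    ∃ (E : ModuleCat.{u} R) (f : E →ₗ[R] M), HasAAPPrecoverWith m M E f ∧
      ∀ h : (E : Type u) →ₗ[R] E, f ∘ₗ h = f → Function.Bijective h := by
  obtain ⟨F, φ, hF, hφ⟩ := exists_precover (M := M) hm hK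
  rw [aap_iff] at hF
  obtain ⟨X, ψ, hX, hψ, hinj⟩ := exists_mono_precover hm hK hF φ (fun Y _ _ hY g => by
    obtain ⟨h, hh⟩ := hφ Y ((aap_iff m Y).2 hY) g
    exact ⟨h, hh.symm⟩)
  refine ⟨X, ψ, ⟨(aap_iff m X).2 hX, fun Y _ _ hY g => ?_⟩, fun h hh =>
    ⟨hinj h hh, surjective_of_mono hm hK hX ψ hψ hinj h hh⟩⟩
  obtain ⟨h, hh⟩ := hψ Y ((aap_iff m Y).1 hY) g
  exact ⟨h, hh.symm⟩

end Cover

theorem almostCoherent_iff_almostAbsolutelyPure_conditions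
    {R : Type u} [CommRing R] (m : Ideal R) (hm : m * m = m) :
    -- (1) ↔ (2)
    ((IsAlmostCoherent m ↔
      (∀ (A B C : Type u) [AddCommGroup A] [Module R A] [AddCommGroup B] [Module R B]
          [AddCommGroup C] [Module R C],
        ∀ (f : A →ₗ[R] B) (g : B →ₗ[R] C),
          Function.Injective f → Function.Surjective g →
            LinearMap.range f = LinearMap.ker g → IsAlmostPure m f →
              IsAlmostAbsolutelyPure m B → IsAlmostAbsolutelyPure m C)) ∧
    -- (1) ↔ (3)
    (IsAlmostCoherent m ↔
      (∀ (A B C : Type u) [AddCommGroup A] [Module R A] [AddCommGroup B] [Module R B]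
          [AddCommGroup C] [Module R C],
        ∀ (f : A →ₗ[R] B) (g : B →ₗ[R] C),
          Function.Injective f → Function.Surjective g →
            LinearMap.range f = LinearMap.ker g → IsPure f →
              IsAlmostAbsolutelyPure m B → IsAlmostAbsolutelyPure m C)) ∧
    -- (1) ↔ (4)
    (IsAlmostCoherent m ↔
      (∀ (A B C : Type u) [AddCommGroup A] [Module R A] [AddCommGroup B] [Module R B]
          [AddCommGroup C] [Module R C],
        ∀ (f : A →ₗ[R] B) (g : B →ₗ[R] C),
          Function.Injective f → Function.Surjective g →
            LinearMap.range f = LinearMap.ker g → IsPure f →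
              IsAbsolutelyPure (R := R) B → IsAlmostAbsolutelyPure m C)) ∧
    -- (1) ↔ (5)
    (IsAlmostCoherent m ↔
      (∀ (ι : Type u) [PartialOrder ι] [IsDirected ι (· ≤ ·)] [DecidableEq ι]
          (E : ι → Type u) [∀ i, AddCommGroup (E i)] [∀ i, Module R (E i)]
          (f : ∀ i j, i ≤ j → E i →ₗ[R] E j) [DirectedSystem E fun i j h => f i j h],
        (∀ i, IsAbsolutelyPure (R := R) (E i)) →
          IsAlmostAbsolutelyPure m (Module.DirectLimit E f))) ∧
    -- (1) ↔ (6)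
    (IsAlmostCoherent m ↔
      (∀ (ι : Type u) [PartialOrder ι] [IsDirected ι (· ≤ ·)] [DecidableEq ι]
          (E : ι → Type u) [∀ i, AddCommGroup (E i)] [∀ i, Module R (E i)]
          (f : ∀ i j, i ≤ j → E i →ₗ[R] E j) [DirectedSystem E fun i j h => f i j h],
        (∀ i, IsAlmostAbsolutelyPure m (E i)) →
          IsAlmostAbsolutelyPure m (Module.DirectLimit E f))) ∧
    -- (1) ↔ (7)
    (IsAlmostCoherent m ↔
      (∀ (M : Type u) [AddCommGroup M] [Module R M],
        ∃ (E : ModuleCat.{u} R) (f : E →ₗ[R] M), HasAAPPrecoverWith m M E f)) ∧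
    -- (1) ↔ (8)
    (IsAlmostCoherent m ↔
      (∀ (M : Type u) [AddCommGroup M] [Module R M],
        ∃ (E : ModuleCat.{u} R) (f : E →ₗ[R] M), HasAAPPrecoverWith m M E f ∧
          ∀ h : (E : Type u) →ₗ[R] E, f ∘ₗ h = f → Function.Bijective h))) := by
  have hKA : IsAlmostCoherent m → KAFG m := fun h => (KAFG1.of_coherent hm h).kafg hm
  have apaap : ∀ (B : Type u) [AddCommGroup B] [Module R B], IsAbsolutelyPure (R := R) B →
      IsAlmostAbsolutelyPure m B := by
    intro B _ _ hB
    rw [aap_iff]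
    exact fun s _ => SAP.of_one s ((ap_iff B).1 hB)
  have hH1 : HCond m → IsAlmostCoherent m := fun H => (HCond.kafg1 hm H).coherent
  have h51 : (∀ (ι : Type u) [PartialOrder ι] [IsDirected ι (· ≤ ·)] [DecidableEq ι]
          (E : ι → Type u) [∀ i, AddCommGroup (E i)] [∀ i, Module R (E i)]
          (f : ∀ i j, i ≤ j → E i →ₗ[R] E j) [DirectedSystem E fun i j h => f i j h],
        (∀ i, IsAbsolutelyPure (R := R) (E i)) →
          IsAlmostAbsolutelyPure m (Module.DirectLimit E f)) → IsAlmostCoherent m := by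
    intro h5
    apply hH1
    intro ι _ _ _ _ E _ _ f _ hE
    exact (aap_iff m _).1 (h5 ι E f (fun i => (ap_iff _).2 (SAP.of_injective (hE i))))
  have h41 : (∀ (A B C : Type u) [AddCommGroup A] [Module R A] [AddCommGroup B] [Module R B]
          [AddCommGroup C] [Module R C],
        ∀ (f : A →ₗ[R] B) (g : B →ₗ[R] C),
          Function.Injective f → Function.Surjective g →
            LinearMap.range f = LinearMap.ker g → IsPure f →
              IsAbsolutelyPure (R := R) B → IsAlmostAbsolutelyPure m C) →
      IsAlmostCoherent m := by
    intro h4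
    apply h51
    intro ι _ _ _ E _ _ f _ hE
    exact four_five h4 (fun i => (ap_iff _).1 (hE i))
  have h12 : IsAlmostCoherent m → (∀ (A B C : Type u) [AddCommGroup A] [Module R A]
          [AddCommGroup B] [Module R B] [AddCommGroup C] [Module R C],
        ∀ (f : A →ₗ[R] B) (g : B →ₗ[R] C),
          Function.Injective f → Function.Surjective g →
            LinearMap.range f = LinearMap.ker g → IsAlmostPure m f →
              IsAlmostAbsolutelyPure m B → IsAlmostAbsolutelyPure m C) := by
    intro h A B C _ _ _ _ _ _ f g _ hg hfg hf hB
    rw [aap_iff] at hB ⊢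
    exact aap_of_epv hm (hKA h) g hg hB (hf.epv hfg)
  refine ⟨⟨h12, fun h2 => h41 ?_⟩, ⟨fun h => ?_, fun h3 => h41 ?_⟩, ⟨fun h => ?_, h41⟩,
    ⟨fun h => ?_, h51⟩, ⟨fun h => ?_, fun h6 => h51 ?_⟩,
    ⟨fun h => ?_, fun h7 => hH1 (HCond.of_precover h7)⟩, ⟨fun h => ?_, fun h8 => ?_⟩⟩
  · intro A B C _ _ _ _ _ _ f g hf hg hfg hp hB
    exact h2 A B C f g hf hg hfg (hp.almostPure m) (apaap B hB)
  · intro A B C _ _ _ _ _ _ f g hf hg hfg hp hB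
    exact h12 h A B C f g hf hg hfg (hp.almostPure m) hB
  · intro A B C _ _ _ _ _ _ f g hf hg hfg hp hB
    exact h3 A B C f g hf hg hfg hp (apaap B hB)
  · intro A B C _ _ _ _ _ _ f g hf hg hfg hp hB
    exact h12 h A B C f g hf hg hfg (hp.almostPure m) (apaap B hB)
  · intro ι _ _ _ E _ _ f _ hE
    rw [aap_iff]
    exact aap_lim hm (hKA h) (fun i s _ => SAP.of_one s ((ap_iff _).1 (hE i)))
  · intro ι _ _ _ E _ _ f _ hE
    rw [aap_iff]
    exact aap_lim hm (hKA h) (fun i => (aap_iff m _).1 (hE i))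
  · intro ι _ _ _ E _ _ f _ hE
    exact h6 ι E f (fun i => apaap _ (hE i))
  · intro M _ _
    exact exists_precover hm (hKA h)
  · intro M _ _
    exact exists_cover hm (hKA h)
  · refine hH1 (HCond.of_precover fun M _ _ => ?_)
    obtain ⟨E, f, hE, -⟩ := h8 M
    exact ⟨E, f, hE⟩
end

section
/- Let R₁ be a coherent commutative ring and R₂ a commutative ring that is not coherent. Let R = R₁ × R₂ and m = R₁ × {0} ⊆ R. Then m is an ideal of R with m² = m, the ring R is almost coherent with respect to m, and R is not coherent. -/
universe u

/-- A commutative ring `S` is coherent if every finitely generated ideal of `S` is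
finitely presented as an `S`-module. -/
def IsCoherentRing (S : Type u) [CommRing S] : Prop :=
  ∀ I : Ideal S, I.FG → Module.FinitePresentation S I

theorem coh_ker {S : Type u} [CommRing S] (h : IsCoherentRing S) (n : ℕ) (a : Fin n → S) :
    (LinearMap.ker (Fintype.linearCombination S a)).FG := by
  have hfg : (LinearMap.range (Fintype.linearCombination S a)).FG := by
    rw [LinearMap.range_eq_map]
    exact Submodule.FG.map _ Module.Finite.fg_top
  have := h (LinearMap.range (Fintype.linearCombination S a)) hfg
  have h2 := Module.FinitePresentation.fg_ker (Fintype.linearCombination S a).rangeRestrict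
    (LinearMap.surjective_rangeRestrict _)
  rwa [LinearMap.ker_rangeRestrict] at h2

theorem coh_of_ker {S : Type u} [CommRing S]
    (h : ∀ (n : ℕ) (a : Fin n → S), (LinearMap.ker (Fintype.linearCombination S a)).FG) :
    IsCoherentRing S := by
  intro I hI
  obtain ⟨n, a, rfl⟩ := Submodule.fg_iff_exists_fin_generating_family.1 hI
  have h1 := h n a
  rw [← LinearMap.ker_rangeRestrict] at h1
  have h2 := Module.finitePresentation_of_surjective (Fintype.linearCombination S a).rangeRestrict
    (LinearMap.surjective_rangeRestrict _) h1
  rw [Fintype.range_linearCombination] at h2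
  exact h2

theorem coh_snd {R₁ R₂ : Type u} [CommRing R₁] [CommRing R₂]
    (h : IsCoherentRing (R₁ × R₂)) : IsCoherentRing R₂ := by
  apply coh_of_ker
  intro n a
  obtain ⟨k, b, hb⟩ := Submodule.fg_iff_exists_fin_generating_family.1
    (coh_ker h n (fun i => ((0 : R₁), a i)))
  refine Submodule.fg_iff_exists_fin_generating_family.2 ⟨k, fun j i => (b j i).2, ?_⟩
  apply le_antisymm
  · rw [Submodule.span_le]
    rintro _ ⟨j, rfl⟩
    have hj : b j ∈ LinearMap.ker (Fintype.linearCombination (R₁ × R₂)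
        (fun i => ((0 : R₁), a i))) := hb ▸ Submodule.subset_span ⟨j, rfl⟩
    have := congrArg Prod.snd hj
    simpa [Fintype.linearCombination_apply, Prod.snd_sum] using this
  · intro x hx
    have hx' : (fun i => ((0 : R₁), x i)) ∈ LinearMap.ker (Fintype.linearCombination (R₁ × R₂)
        (fun i => ((0 : R₁), a i))) := by
      have : ∑ i, x i * a i = 0 := by simpa [Fintype.linearCombination_apply] using hx
      simp only [LinearMap.mem_ker, Fintype.linearCombination_apply]
      ext
      · simp [Prod.fst_sum]
      · simpa [Prod.snd_sum] using this
    rw [← hb, Submodule.mem_span_range_iff_exists_fun] at hx'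
    obtain ⟨c, hc⟩ := hx'
    rw [Submodule.mem_span_range_iff_exists_fun]
    refine ⟨fun j => (c j).2, ?_⟩
    ext i
    have := congrArg Prod.snd (congrFun hc i)
    simpa [Prod.snd_sum] using this

theorem prod_afp {R₁ R₂ : Type u} [CommRing R₁] [CommRing R₂]
    (h₁ : IsCoherentRing R₁) (I : Ideal (R₁ × R₂))
    (hI : IsAlmostFG (Ideal.prod (⊤ : Ideal R₁) (⊥ : Ideal R₂)) I) :
    IsAlmostFP (Ideal.prod (⊤ : Ideal R₁) (⊥ : Ideal R₂)) I := by
  rintro ⟨s, s'⟩ hs ⟨t, t'⟩ ht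
  obtain rfl : s' = 0 := by simpa [Ideal.mem_prod] using hs
  obtain rfl : t' = 0 := by simpa [Ideal.mem_prod] using ht
  obtain ⟨n, f, hf⟩ := hI (1, 0) (by simp [Ideal.mem_prod])
  let a : Fin n → R₁ := fun i => (f (Pi.single i 1)).1.1
  have hfa : ∀ x : Fin n → R₁ × R₂, (f x).1.1 = ∑ i, (x i).1 * a i := by
    intro x
    conv_lhs => rw [LinearMap.pi_apply_eq_sum_univ f x]
    simp only [Submodule.coe_sum, Prod.fst_sum, Submodule.coe_smul, smul_eq_mul, Prod.fst_mul, a]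
    refine Finset.sum_congr rfl fun i _ => ?_
    congr 5
    ext j <;> simp [Pi.single_apply, eq_comm]
  obtain ⟨k, b, hb⟩ := Submodule.fg_iff_exists_fin_generating_family.1 (coh_ker h₁ n a)
  let g : (Fin k → R₁ × R₂) →ₗ[R₁ × R₂] (Fin n → R₁ × R₂) :=
    Fintype.linearCombination (R₁ × R₂) (fun j i => (b j i, (0 : R₂)))
  refine ⟨n, k, g, ((1, 0) : R₁ × R₂) • f, ?_, ?_, ?_⟩
  · apply LinearMap.ext
    intro c
    apply Subtype.ext
    have hk : ∑ j, (c j).1 • b j ∈ LinearMap.ker (Fintype.linearCombination R₁ a) := by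
      rw [← hb, Submodule.mem_span_range_iff_exists_fun]
      exact ⟨_, rfl⟩
    rw [LinearMap.mem_ker, Fintype.linearCombination_apply] at hk
    ext
    · have h0 : (f (g c)).1.1 = 0 := by
        rw [hfa]
        simpa [g, Fintype.linearCombination_apply, Prod.fst_sum] using hk
      change (1 : R₁) * (f (g c)).1.1 = 0
      rw [h0, mul_zero]
    · simp
  · intro y
    obtain ⟨x, hx⟩ := hf y
    refine ⟨((s, 0) : R₁ × R₂) • x, ?_⟩
    rw [LinearMap.smul_apply, map_smul, hx, smul_smul, smul_smul]
    simp
  · intro x hx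
    have h0 : (f x).1.1 = 0 := by
      have := congrArg (fun z : I => z.1.1) (LinearMap.mem_ker.1 hx)
      simpa using this
    have hk : (fun i => (x i).1) ∈ LinearMap.ker (Fintype.linearCombination R₁ a) := by
      rw [LinearMap.mem_ker, Fintype.linearCombination_apply]
      simpa [hfa] using h0
    rw [← hb, Submodule.mem_span_range_iff_exists_fun] at hk
    obtain ⟨c, hc⟩ := hk
    refine ⟨((t, 0) : R₁ × R₂) • fun j => (c j, 0), ?_⟩
    rw [map_smul]
    ext i
    · have := congrFun hc i
      simp only [Finset.sum_apply, Pi.smul_apply, smul_eq_mul] at this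
      simp [g, Fintype.linearCombination_apply, Prod.fst_sum, this]
    · simp

/-- If `R₁` is coherent and `R₂` is not coherent, then
`R = R₁ × R₂` with `m = R₁ × {0}` is an almost coherent ring (with respect to `m`)
which is not coherent, and `m² = m`. -/
theorem prod_almostCoherent_not_coherent
    (R₁ R₂ : Type u) [CommRing R₁] [CommRing R₂]
    (h₁ : IsCoherentRing R₁) (h₂ : ¬ IsCoherentRing R₂) :
    (Ideal.prod (⊤ : Ideal R₁) (⊥ : Ideal R₂)) * (Ideal.prod (⊤ : Ideal R₁) (⊥ : Ideal R₂)) =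
        Ideal.prod (⊤ : Ideal R₁) (⊥ : Ideal R₂) ∧
    (∀ I : Ideal (R₁ × R₂),
      IsAlmostFG (Ideal.prod (⊤ : Ideal R₁) (⊥ : Ideal R₂)) I →
        IsAlmostFP (Ideal.prod (⊤ : Ideal R₁) (⊥ : Ideal R₂)) I) ∧
    ¬ IsCoherentRing (R₁ × R₂) := by
  refine ⟨?_, fun I hI => prod_afp h₁ I hI, fun h => h₂ (coh_snd h)⟩
  apply le_antisymm Ideal.mul_le_left
  rintro ⟨x, y⟩ hx
  obtain rfl : y = 0 := by simpa [Ideal.mem_prod] using hx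
  have := Ideal.mul_mem_mul hx
    (show ((1, 0) : R₁ × R₂) ∈ Ideal.prod (⊤ : Ideal R₁) (⊥ : Ideal R₂) by simp [Ideal.mem_prod])
  simpa using this
end
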